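/- Let p ≥ 2 be an integer and η > 0. Let (c_k)_{k≥1} be complex numbers, (φ_k)_{k≥1} real numbers, and γ_k : (0,∞) → ℂ functions such that V(x) = Σ_{k=1}^∞ c_k e^{−iφ_k x} γ_k(x) is real-valued, and assume: τ := sup_k Var(γ_k,(0,∞)) < ∞; ∫_0^∞ (sup_k |γ_k(x)|)^p dx < ∞; Σ_k |c_k| < ∞; Σ_{k_1,…,k_j} |c_{k_1} ⋯ c_{k_j} h_j(η; φ_{k_1},…,φ_{k_j})| < ∞ for j = 1,…,p−1; and Kη ≠ ε_1 φ_{k_1} + ⋯ + ε_J φ_{k_J} for all integers 1 ≤ K ≤ J ≤ p, all indices and all signs ε_i ∈ {+1,−1}. Let θ : (0,∞) → ℝ be locally absolutely continuous with θ'(x) = (V(x)/η)·(cos(ηx + 2θ(x)) − 1) for almost every x, and set β_k(x) = c_k e^{−iφ_k x} γ_k(x), S_{J,K}(x) = Σ_{m_1,…,m_J=1}^∞ f_{J,K}(η; φ_{m_1},…,φ_{m_J}) β_{m_1}(x) ⋯ β_{m_J}(x) e^{iK(ηx + 2θ(x))}, and E_{J,K} = Σ_{m_1,…,m_J=1}^∞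 |c_{m_1} ⋯ c_{m_J} g_{J,K}(η; φ_{m_1},…,φ_{m_J})|. Then for every J ∈ {1,…,p−1} and all 0 ≤ a < b < ∞, | ∫_a^b ( Σ_{K=1}^{J} S_{J,K}(x) − Σ_{K=0}^{J+1} S_{J+1,K}(x) ) dx | ≤ Σ_{K=1}^{J} (1/K) E_{J,K} τ^J. -/

import Mathlib

open scoped BigOperators ENNReal
open MeasureTheory

/-- The functions `h_J` of `1+J` real variables (extra variables beyond the first `J`
are ignored), defined recursively by `h_0(η) = 1` and
`h_J(η;φ_1,…,φ_J) = (η - φ_1 - ⋯ - φ_J)⁻¹ Σ_{j=0}^{J-1} h_j(η;φ_1,…,φ_j) h_{J-j-1}(η;φ_{j+1},…,φ_{J-1})`. -/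
noncomputable def hFun : ℕ → ℝ → (ℕ → ℝ) → ℝ
  | 0, _, _ => 1
  | (J+1), η, φ =>
      (η - ∑ i ∈ Finset.range (J+1), φ i)⁻¹ *
        ∑ j ∈ (Finset.range (J+1)).attach,
          hFun j.1 η φ * hFun (J - j.1) η (fun i => φ (i + j.1))
  termination_by J _ _ => J
  decreasing_by
  · exact Nat.lt_of_lt_of_le (Finset.mem_range.mp j.2) (Nat.le_refl _)
  · exact Nat.lt_succ_of_le (Nat.sub_le J j.1)

/-- Pad a tuple `m : Fin J → ℕ` of indices into a function `ℕ → ℝ` listing `φ_{m_1},…,φ_{m_J}`. -/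
noncomputable def padFin (J : ℕ) (φ : ℕ → ℝ) (m : Fin J → ℕ) : ℕ → ℝ :=
  fun n => if h : n < J then φ (m ⟨n, h⟩) else 0

/-- ω_a coefficients: ω_0 = -1, ω_{±1} = 1/2, otherwise 0. -/
noncomputable def omegaCoef : ℤ → ℝ := fun a =>
  if a = 0 then -1 else if a = 1 ∨ a = -1 then (1 : ℝ) / 2 else 0

/-- The functions `f_{J,K}` of `1+J` real variables (extra variables beyond the first `J`
are ignored); `f_{J,K} = 0` unless `1 ≤ J` and `0 ≤ K ≤ J`. For `J ≥ 2`,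
`f_{J,K}(η;φ) = η⁻¹ Σ_{a=-1}^{1} ω_a (1/J!) Σ_{σ ∈ S_J} g_{J-1,K+a}(η;φ_{σ(1)},…,φ_{σ(J-1)})`,
where `g_{J,K}(η;φ) = -2K (Kη - φ_1 - ⋯ - φ_J)⁻¹ f_{J,K}(η;φ)` is inlined. -/
noncomputable def fAux : ℕ → ℤ → ℝ → (ℕ → ℝ) → ℝ
  | 0, _, _, _ => 0
  | 1, K, η, _ => if K = 0 then -η⁻¹ else if K = 1 then η⁻¹ else 0
  | (J+2), K, η, φ =>
      if 0 ≤ K ∧ K ≤ (J : ℤ) + 2 then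
        η⁻¹ * ∑ a ∈ ({-1, 0, 1} : Finset ℤ), omegaCoef a *
          ((Nat.factorial (J+2) : ℝ)⁻¹ *
            ∑ σ : Equiv.Perm (Fin (J+2)),
              (fun ψ : ℕ → ℝ =>
                (-2 * ((K + a : ℤ) : ℝ)) /
                    (((K + a : ℤ) : ℝ) * η - ∑ i ∈ Finset.range (J+1), ψ i) *
                  fAux (J+1) (K+a) η ψ)
              (fun i => if h : i < J+2 then φ (σ ⟨i, h⟩) else φ i))
      else 0

/-- The functions `g_{J,K} = -2K (Kη - φ_1 - ⋯ - φ_J)⁻¹ f_{J,K}`. -/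
noncomputable def gAux (J : ℕ) (K : ℤ) (η : ℝ) (φ : ℕ → ℝ) : ℝ :=
  (-2 * (K : ℝ)) / ((K : ℝ) * η - ∑ i ∈ Finset.range J, φ i) * fAux J K η φ

/-- Symmetric product `p ⊙ q` of a function of `1+I` variables and one of `1+J` variables. -/
noncomputable def symProd (I J : ℕ) (p q : ℝ → (ℕ → ℝ) → ℝ) (η : ℝ) (φ : ℕ → ℝ) : ℝ :=
  (Nat.factorial (I + J) : ℝ)⁻¹ *
    ∑ σ : Equiv.Perm (Fin (I + J)),
      p η (fun i => if h : i < I + J then φ (σ ⟨i, h⟩) else φ i) *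
      q η (fun i => if h : i + I < I + J then φ (σ ⟨i + I, h⟩) else φ (i + I))

/-- `E_{J,K} = Σ_{m_1,…,m_J} |c_{m_1} ⋯ c_{m_J} g_{J,K}(η;φ_{m_1},…,φ_{m_J})| ∈ [0,∞]`. -/
noncomputable def EFun (η : ℝ) (c : ℕ → ℂ) (φ : ℕ → ℝ) (J : ℕ) (K : ℤ) : ℝ≥0∞ :=
  ∑' m : Fin J → ℕ,
    (‖∏ i, c (m i)‖₊ : ℝ≥0∞) * (‖gAux J K η (padFin J φ m)‖₊ : ℝ≥0∞)

/-- `S_{J,K}(x) = Σ_{m_1,…,m_J} f_{J,K}(η;φ_{m_1},…,φ_{m_J}) β_{m_1}(x) ⋯ β_{m_J}(x)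
e^{iK(ηx + 2θ(x))}` with `β_k(x) = c_k e^{-iφ_k x} γ_k(x)`. -/
noncomputable def SFun (η : ℝ) (c : ℕ → ℂ) (φ : ℕ → ℝ) (γ : ℕ → ℝ → ℂ) (θ : ℝ → ℝ)
    (J K : ℕ) (x : ℝ) : ℂ :=
  ∑' m : Fin J → ℕ,
    (fAux J (K : ℤ) η (padFin J φ m) : ℂ) *
      (∏ i, (c (m i) * Complex.exp (-Complex.I * φ (m i) * x) * γ (m i) x)) *
      Complex.exp (Complex.I * K * (η * x + 2 * θ x))

/-- A tuple of reals, extended by zero to a sequence. -/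
noncomputable def padTuple {J : ℕ} (w : Fin J → ℝ) : ℕ → ℝ :=
  fun n => if h : n < J then w ⟨n, h⟩ else 0

theorem padTuple_of_lt {J : ℕ} (w : Fin J → ℝ) {i : ℕ} (h : i < J) :
    padTuple w i = w ⟨i, h⟩ := dif_pos h

theorem sum_range_padTuple {J : ℕ} (w : Fin J → ℝ) :
    ∑ i ∈ Finset.range J, padTuple w i = ∑ i, w i := by
  rw [Finset.sum_range]
  exact Finset.sum_congr rfl fun i _ => padTuple_of_lt w i.2

theorem padTuple_append_of_lt {I J : ℕ} (u : Fin I → ℝ) (v : Fin J → ℝ) {i : ℕ} (h : i < I) :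
    padTuple (Fin.append u v) i = padTuple u i := by
  rw [padTuple_of_lt _ h, padTuple_of_lt _ (by omega : i < I + J)]
  exact Fin.append_left u v ⟨i, h⟩

theorem padTuple_append_add {I J : ℕ} (u : Fin I → ℝ) (v : Fin J → ℝ) :
    (fun i => padTuple (Fin.append u v) (i + I)) = padTuple v := by
  funext i
  by_cases h : i < J
  · rw [padTuple_of_lt _ h, padTuple_of_lt _ (by omega : i + I < I + J)]
    rw [← Fin.append_right u v ⟨i, h⟩]
    congr 1
    ext
    simp [add_comm]
  · simp [padTuple, h, show ¬ (i + I < I + J) by omega]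

theorem append_comp {α β : Type*} {I J : ℕ} (φ : α → β) (u : Fin I → α) (v : Fin J → α) :
    φ ∘ Fin.append u v = Fin.append (φ ∘ u) (φ ∘ v) := by
  funext i
  refine Fin.addCases (fun i => ?_) (fun i => ?_) i <;> simp

theorem hFun_zero (η : ℝ) (ψ : ℕ → ℝ) : hFun 0 η ψ = 1 := by rw [hFun]

theorem hFun_succ (J : ℕ) (η : ℝ) (ψ : ℕ → ℝ) :
    hFun (J + 1) η ψ = (η - ∑ i ∈ Finset.range (J + 1), ψ i)⁻¹ *
      ∑ j ∈ Finset.HasAntidiagonal.antidiagonal J,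
          hFun j.1 η ψ * hFun j.2 η (fun i => ψ (i + j.1)) := by
  rw [hFun, Finset.Nat.sum_antidiagonal_eq_sum_range_succ
    (fun a b => hFun a η ψ * hFun b η (fun i => ψ (i + a))),
    Finset.sum_attach (Finset.range (J + 1))
      (fun j => hFun j η ψ * hFun (J - j) η (fun i => ψ (i + j)))]

theorem dependsOn_hFun (η : ℝ) (J : ℕ) : DependsOn (hFun J η) (Set.Iio J) := by
  induction J using Nat.strong_induction_on with
  | _ J ih =>
    intro ψ χ h
    rcases J with _ | J
    · simp [hFun_zero]
    · rw [hFun_succ, hFun_succ]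
      congr 1
      · congr 2
        exact Finset.sum_congr rfl fun i hi => h i (by simpa using hi)
      · refine Finset.sum_congr rfl fun j hj => ?_
        have hj' := Finset.HasAntidiagonal.mem_antidiagonal.1 hj
        congr 1
        · exact ih _ (by omega) fun i hi => h i (by simp at hi ⊢; omega)
        · exact ih _ (by omega) fun i hi => h _ (by simp at hi ⊢; omega)

theorem fAux_one (K : ℤ) (η : ℝ) (ψ : ℕ → ℝ) :
    fAux 1 K η ψ = if K = 0 then -η⁻¹ else if K = 1 then η⁻¹ else 0 := by
  rw [fAux]

theorem fAux_zero (K : ℤ) (η : ℝ) (ψ : ℕ → ℝ) : fAux 0 K η ψ = 0 := by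
  rw [fAux]

theorem fAux_add_two (J : ℕ) (K : ℤ) (η : ℝ) (ψ : ℕ → ℝ) :
    fAux (J + 2) K η ψ = if 0 ≤ K ∧ K ≤ (J : ℤ) + 2 then
        η⁻¹ * ∑ a ∈ ({-1, 0, 1} : Finset ℤ), omegaCoef a *
          ((Nat.factorial (J + 2) : ℝ)⁻¹ *
            ∑ σ : Equiv.Perm (Fin (J + 2)),
              gAux (J + 1) (K + a) η
                (fun i => if h : i < J + 2 then ψ (σ ⟨i, h⟩) else ψ i))
      else 0 := by
  rw [fAux]
  rfl

theorem fAux_eq_zero {J : ℕ} {K : ℤ} (h : K < 0 ∨ (J : ℤ) < K) (η : ℝ) (ψ : ℕ → ℝ) :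
    fAux J K η ψ = 0 := by
  rcases J with _ | _ | J
  · exact fAux_zero ..
  · rw [fAux_one, if_neg (by omega), if_neg (by push_cast at h; omega)]
  · rw [fAux_add_two, if_neg (by push_cast at h; omega)]

theorem gAux_eq_zero {J : ℕ} {K : ℤ} (h : K ≤ 0 ∨ (J : ℤ) < K) (η : ℝ) (ψ : ℕ → ℝ) :
    gAux J K η ψ = 0 := by
  rcases eq_or_ne K 0 with rfl | h0
  · simp [gAux]
  · rw [gAux, fAux_eq_zero (by omega), mul_zero]

theorem dependsOn_gAux_of_fAux {J : ℕ} {K : ℤ} {η : ℝ}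
    (h : DependsOn (fAux J K η) (Set.Iio J)) : DependsOn (gAux J K η) (Set.Iio J) := by
  intro ψ χ hψ
  rw [gAux, gAux, h hψ, Finset.sum_congr rfl fun i hi => hψ i (by simpa using hi)]

theorem dependsOn_fAux (η : ℝ) (J : ℕ) (K : ℤ) : DependsOn (fAux J K η) (Set.Iio J) := by
  induction J generalizing K with
  | zero => intro ψ χ _; simp [fAux_zero]
  | succ J ih =>
    intro ψ χ h
    rcases J with _ | J
    · simp [fAux_one]
    · rw [fAux_add_two, fAux_add_two]
      have key : ∀ (a : ℤ) (σ : Equiv.Perm (Fin (J + 2))),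
          gAux (J + 1) (K + a) η (fun i => if h : i < J + 2 then ψ (σ ⟨i, h⟩) else ψ i) =
          gAux (J + 1) (K + a) η (fun i => if h : i < J + 2 then χ (σ ⟨i, h⟩) else χ i) := by
        intro a σ
        refine dependsOn_gAux_of_fAux (ih _) fun i hi => ?_
        have hi' : i < J + 2 := by simp at hi; omega
        simp only [hi', dif_pos]
        exact h _ (σ _).2
      simp only [key]

theorem dependsOn_gAux (η : ℝ) (J : ℕ) (K : ℤ) : DependsOn (gAux J K η) (Set.Iio J) :=
  dependsOn_gAux_of_fAux (dependsOn_fAux η J K)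

/-- The recursion for `f`, evaluated on a tuple. -/
theorem fAux_padTuple {J : ℕ} (K : ℤ) (hK : 0 ≤ K ∧ K ≤ (J : ℤ) + 2) (η : ℝ)
    (w : Fin (J + 2) → ℝ) :
    fAux (J + 2) K η (padTuple w) = η⁻¹ * ∑ a ∈ ({-1, 0, 1} : Finset ℤ), omegaCoef a *
      ((Nat.factorial (J + 2) : ℝ)⁻¹ *
        ∑ σ : Equiv.Perm (Fin (J + 2)), gAux (J + 1) (K + a) η (padTuple (w ∘ σ))) := by
  rw [fAux_add_two, if_pos hK]
  have key : ∀ (σ : Equiv.Perm (Fin (J + 2))),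
      (fun i => if h : i < J + 2 then padTuple w (σ ⟨i, h⟩) else padTuple w i) =
        padTuple (w ∘ σ) := by
    intro σ
    funext i
    by_cases hi : i < J + 2
    · simp [hi, padTuple]
    · simp [hi, padTuple]
  simp only [key]

theorem fAux_padTuple_comp_perm {J : ℕ} (K : ℤ) (η : ℝ) (w : Fin J → ℝ)
    (τ : Equiv.Perm (Fin J)) : fAux J K η (padTuple (w ∘ τ)) = fAux J K η (padTuple w) := by
  rcases J with _ | _ | J
  · simp [fAux_zero]
  · simp [fAux_one]
  · by_cases hK : 0 ≤ K ∧ K ≤ (J : ℤ) + 2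
    · rw [fAux_padTuple K hK, fAux_padTuple K hK]
      have key : ∀ a : ℤ, ∑ σ : Equiv.Perm (Fin (J + 2)),
          gAux (J + 1) (K + a) η (padTuple ((w ∘ τ) ∘ σ)) =
          ∑ σ : Equiv.Perm (Fin (J + 2)), gAux (J + 1) (K + a) η (padTuple (w ∘ σ)) := fun a =>
        Fintype.sum_equiv (Equiv.mulLeft τ) _ _ fun σ => rfl
      simp only [key]
    · rw [fAux_add_two, fAux_add_two, if_neg hK, if_neg hK]

theorem gAux_padTuple_comp_perm {J : ℕ} (K : ℤ) (η : ℝ) (w : Fin J → ℝ)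
    (τ : Equiv.Perm (Fin J)) : gAux J K η (padTuple (w ∘ τ)) = gAux J K η (padTuple w) := by
  rw [gAux, gAux, fAux_padTuple_comp_perm, sum_range_padTuple, sum_range_padTuple]
  congr 3
  exact Equiv.sum_comp τ w

section WordPolynomials

open MvPolynomial Finset.HasAntidiagonal

variable {ι : Type*}

/-- The exponent of the monomial `∏ i, X (t i)`. -/
noncomputable def tupleExp {J : ℕ} (t : Fin J → ι) : ι →₀ ℕ := ∑ i, Finsupp.single (t i) 1

theorem degree_tupleExp {J : ℕ} (t : Fin J → ι) : (tupleExp t).degree = J := by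
  simp [tupleExp]

theorem tupleExp_append {I J : ℕ} (u : Fin I → ι) (v : Fin J → ι) :
    tupleExp (Fin.append u v) = tupleExp u + tupleExp v := by
  simp [tupleExp, Fin.sum_univ_add]

theorem tupleExp_comp_perm {J : ℕ} (t : Fin J → ι) (σ : Equiv.Perm (Fin J)) :
    tupleExp (t ∘ σ) = tupleExp t :=
  Equiv.sum_comp σ fun i => Finsupp.single (t i) 1

theorem exists_tupleExp_eq (J : ℕ) (m : ι →₀ ℕ) (hm : m.degree = J) :
    ∃ t : Fin J → ι, tupleExp t = m := by
  classical
  induction J generalizing m with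
  | zero =>
    refine ⟨Fin.elim0, ?_⟩
    rw [Finsupp.degree_eq_zero_iff] at hm
    simp [tupleExp, hm]
  | succ J ih =>
    have h0 : m ≠ 0 := by rintro rfl; simp at hm
    obtain ⟨i, hi⟩ := Finsupp.ne_iff.1 h0
    have hle : Finsupp.single i 1 ≤ m := by
      rw [Finsupp.single_le_iff]; simp at hi; omega
    have hsplit : m - Finsupp.single i 1 + Finsupp.single i 1 = m := tsub_add_cancel_of_le hle
    have hd : (m - Finsupp.single i 1).degree = J := by
      have := congrArg Finsupp.degree hsplit
      rw [map_add, Finsupp.degree_single] at this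
      omega
    obtain ⟨t, ht⟩ := ih _ hd
    refine ⟨Fin.cons i t, ?_⟩
    rw [← hsplit, ← ht]
    simp [tupleExp, Fin.sum_univ_succ, add_comm]

theorem linearCombination_tupleExp (φ : ι → ℝ) {J : ℕ} (t : Fin J → ι) :
    Finsupp.linearCombination ℕ φ (tupleExp t) = ∑ i, φ (t i) := by
  simp [tupleExp]

/-- The derivation of `ℝ[X]` scaling `X i` by `φ i`. -/
noncomputable def weightDer (φ : ι → ℝ) :
    Derivation ℝ (MvPolynomial ι ℝ) (MvPolynomial ι ℝ) :=
  mkDerivation ℝ fun i => C (φ i) * X i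

theorem weightDer_monomial (φ : ι → ℝ) (s : ι →₀ ℕ) (r : ℝ) :
    weightDer φ (monomial s r) = monomial s (Finsupp.linearCombination ℕ φ s * r) := by
  classical
  rw [weightDer, mkDerivation_monomial, Finsupp.linearCombination_apply, Finsupp.sum, Finsupp.sum,
    Finset.sum_mul, map_sum, Finset.smul_sum]
  refine Finset.sum_congr rfl fun i hi => ?_
  have h1 : s - Finsupp.single i 1 + Finsupp.single i 1 = s := by
    refine tsub_add_cancel_of_le (Finsupp.single_le_iff.2 ?_)
    have := Finsupp.mem_support_iff.1 hi
    omega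
  have hX : C (φ i) * X i = monomial (Finsupp.single i 1) (φ i) := by
    rw [X, C_mul_monomial, mul_one]
  rw [hX, smul_eq_mul, monomial_mul, h1, smul_monomial]
  congr 1
  simp only [smul_eq_mul, nsmul_eq_mul]
  ring

theorem coeff_weightDer (φ : ι → ℝ) (m : ι →₀ ℕ) (Q : MvPolynomial ι ℝ) :
    coeff m (weightDer φ Q) = Finsupp.linearCombination ℕ φ m * coeff m Q := by
  classical
  induction Q using MvPolynomial.induction_on' with
  | monomial s r =>
    rw [weightDer_monomial, coeff_monomial, coeff_monomial]
    split_ifs with h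
    · rw [h]
    · simp
  | add p q hp hq => rw [map_add, coeff_add, hp, hq, coeff_add, mul_add]

variable [Fintype ι]

/-- The polynomial `∑ t, p (φ (t 1), …, φ (t J)) X (t 1) ⋯ X (t J)`. -/
noncomputable def wordPoly (φ : ι → ℝ) (J : ℕ) (p : (ℕ → ℝ) → ℝ) : MvPolynomial ι ℝ :=
  ∑ t : Fin J → ι, monomial (tupleExp t) (p (padTuple (φ ∘ t)))

theorem wordPoly_congr {φ : ι → ℝ} {J : ℕ} {p q : (ℕ → ℝ) → ℝ}
    (h : ∀ t : Fin J → ι, p (padTuple (φ ∘ t)) = q (padTuple (φ ∘ t))) :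
    wordPoly φ J p = wordPoly φ J q :=
  Finset.sum_congr rfl fun t _ => by rw [h t]

theorem wordPoly_sum (φ : ι → ℝ) (J : ℕ) {κ : Type*} (s : Finset κ) (p : κ → (ℕ → ℝ) → ℝ) :
    wordPoly φ J (fun ψ => ∑ k ∈ s, p k ψ) = ∑ k ∈ s, wordPoly φ J (p k) := by
  simp only [wordPoly, map_sum]
  exact Finset.sum_comm

theorem wordPoly_const_mul (φ : ι → ℝ) (J : ℕ) (a : ℝ) (p : (ℕ → ℝ) → ℝ) :
    wordPoly φ J (fun ψ => a * p ψ) = C a * wordPoly φ J p := by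
  simp only [wordPoly, Finset.mul_sum, C_mul_monomial]

theorem wordPoly_zero_right (φ : ι → ℝ) (J : ℕ) : wordPoly φ J (fun _ => 0) = 0 := by
  simp [wordPoly]

theorem wordPoly_zero_left (φ : ι → ℝ) (p : (ℕ → ℝ) → ℝ) :
    wordPoly φ 0 p = C (p fun _ => 0) := by
  have h : padTuple (φ ∘ (default : Fin 0 → ι)) = fun _ => 0 := by funext i; simp [padTuple]
  rw [wordPoly, Fintype.sum_unique, h]
  simp [tupleExp]

theorem wordPoly_mul (φ : ι → ℝ) {I : ℕ} (J : ℕ) {p : (ℕ → ℝ) → ℝ}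
    (hp : DependsOn p (Set.Iio I)) (q : (ℕ → ℝ) → ℝ) :
    wordPoly φ I p * wordPoly φ J q =
      wordPoly φ (I + J) (fun ψ => p ψ * q (fun i => ψ (i + I))) := by
  rw [wordPoly, wordPoly, Fintype.sum_mul_sum, ← Fintype.sum_prod_type', wordPoly]
  refine Fintype.sum_equiv (Fin.appendEquiv I J) _ _ fun uv => ?_
  have e : Fin.appendEquiv I J uv = Fin.append uv.1 uv.2 := rfl
  rw [e, append_comp, padTuple_append_add, tupleExp_append, monomial_mul,
    hp (x := padTuple (Fin.append (φ ∘ uv.1) (φ ∘ uv.2))) (y := padTuple (φ ∘ uv.1))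
      fun i hi => padTuple_append_of_lt _ _ hi]

theorem weightDer_wordPoly (φ : ι → ℝ) (J : ℕ) (p : (ℕ → ℝ) → ℝ) :
    weightDer φ (wordPoly φ J p) =
      wordPoly φ J (fun ψ => (∑ i ∈ Finset.range J, ψ i) * p ψ) := by
  simp only [wordPoly, map_sum, weightDer_monomial, linearCombination_tupleExp,
    sum_range_padTuple, Function.comp_apply]

theorem wordPoly_mem (φ : ι → ℝ) (J : ℕ) (p : (ℕ → ℝ) → ℝ) :
    wordPoly φ J p ∈ idealOfVars ι ℝ ^ J := by
  classical
  rw [mem_pow_idealOfVars_iff']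
  intro x hx
  rw [wordPoly, coeff_sum]
  refine Finset.sum_eq_zero fun t _ => ?_
  rw [coeff_monomial, if_neg]
  rintro rfl
  simp [degree_tupleExp] at hx

theorem coeff_wordPoly_of_degree_ne (φ : ι → ℝ) {J : ℕ} (p : (ℕ → ℝ) → ℝ) {m : ι →₀ ℕ}
    (hm : m.degree ≠ J) : coeff m (wordPoly φ J p) = 0 := by
  classical
  rw [wordPoly, coeff_sum]
  refine Finset.sum_eq_zero fun t _ => ?_
  rw [coeff_monomial, if_neg]
  rintro rfl
  simp [degree_tupleExp] at hm

theorem wordPoly_average (φ : ι → ℝ) (J : ℕ) (p q : (ℕ → ℝ) → ℝ)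
    (h : ∀ t : Fin J → ι, p (padTuple (φ ∘ t)) =
      (Nat.factorial J : ℝ)⁻¹ * ∑ σ : Equiv.Perm (Fin J), q (padTuple ((φ ∘ t) ∘ σ))) :
    wordPoly φ J p = wordPoly φ J q := by
  have key : ∀ σ : Equiv.Perm (Fin J),
      ∑ t : Fin J → ι, monomial (tupleExp t) (q (padTuple ((φ ∘ t) ∘ σ))) =
        wordPoly φ J q := fun σ =>
    Fintype.sum_equiv (Equiv.arrowCongr σ.symm (Equiv.refl ι)) _ _ fun t => by
      have : (Equiv.arrowCongr σ.symm (Equiv.refl ι)) t = t ∘ σ := by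
        funext i; simp [Equiv.arrowCongr]
      rw [this, tupleExp_comp_perm]
      rfl
  rw [wordPoly]
  simp only [h, ← C_mul_monomial, map_sum]
  rw [← Finset.mul_sum, Finset.sum_comm, Finset.sum_congr rfl fun σ _ => key σ]
  rw [Finset.sum_const, Finset.card_univ, Fintype.card_perm, Fintype.card_fin, nsmul_eq_mul,
    ← mul_assoc, ← map_natCast (C : ℝ →+* MvPolynomial ι ℝ), ← map_mul,
    inv_mul_cancel₀ (Nat.cast_ne_zero.2 (Nat.factorial_ne_zero J)), map_one, one_mul]

theorem coeff_wordPoly_id {J : ℕ} (φ : Fin J → ℝ) (p : (ℕ → ℝ) → ℝ) :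
    coeff (tupleExp id) (wordPoly φ J p) =
      ∑ σ : Equiv.Perm (Fin J), p (padTuple (φ ∘ σ)) := by
  classical
  have hiff : ∀ t : Fin J → Fin J, tupleExp t = tupleExp id ↔ Function.Bijective t := by
    intro t
    constructor
    · intro h
      refine Finite.injective_iff_bijective.1 (Finite.injective_iff_surjective.2 fun j => ?_)
      by_contra hj
      push Not at hj
      have := DFunLike.congr_fun h j
      simp [tupleExp, Finsupp.finsetSum_apply, Finsupp.single_apply, hj] at this
    · intro h
      exact tupleExp_comp_perm id (Equiv.ofBijective t h)
  rw [wordPoly, coeff_sum]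
  simp only [coeff_monomial, hiff]
  rw [← Finset.sum_filter]
  exact Finset.sum_bij (fun t h => Equiv.ofBijective t (Finset.mem_filter.1 h).2)
    (fun _ _ => Finset.mem_univ _) (fun _ _ _ _ h => by injection h)
    (fun σ _ => ⟨σ, Finset.mem_filter.2 ⟨Finset.mem_univ _, σ.bijective⟩,
      Equiv.ext fun _ => rfl⟩) fun t h => rfl

end WordPolynomials

section Riccati

open MvPolynomial Finset.HasAntidiagonal

theorem sum_square_sub_sum_antidiagonal_mem {R : Type*} [CommRing R] (I : Ideal R)
    (F : ℕ → ℕ → R) {m n : ℕ} (hmn : m ≤ n) (hF : ∀ a b, m ≤ a + b → F a b ∈ I) :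
    ∑ a ∈ Finset.range n, ∑ b ∈ Finset.range n, F a b -
      ∑ j ∈ Finset.range m, ∑ x ∈ antidiagonal j, F x.1 x.2 ∈ I := by
  set s := Finset.range n ×ˢ Finset.range n
  have h1 : ∑ j ∈ Finset.range m, ∑ x ∈ antidiagonal j, F x.1 x.2 =
      ∑ x ∈ s with x.1 + x.2 < m, F x.1 x.2 := by
    rw [← Finset.sum_fiberwise_of_maps_to (g := fun x : ℕ × ℕ => x.1 + x.2) (t := Finset.range m)
      (fun x hx => Finset.mem_range.2 (Finset.mem_filter.1 hx).2)]
    refine Finset.sum_congr rfl fun j hj => Finset.sum_congr ?_ fun _ _ => rfl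
    ext x
    have := Finset.mem_range.1 hj
    simp only [mem_antidiagonal, s, Finset.mem_filter, Finset.mem_product, Finset.mem_range]
    omega
  rw [h1, ← Finset.sum_product' (f := F), ← Finset.sum_filter_add_sum_filter_not s
    (fun x => x.1 + x.2 < m), add_sub_cancel_left]
  exact Ideal.sum_mem _ fun x hx => hF _ _ (not_lt.1 (Finset.mem_filter.1 hx).2)

variable {ι : Type*} [Fintype ι]

/-- The sum of the variables. -/
noncomputable def potPoly (φ : ι → ℝ) : MvPolynomial ι ℝ := wordPoly φ 1 fun _ => 1

theorem wordPoly_succ (φ : ι → ℝ) {J : ℕ} {p : (ℕ → ℝ) → ℝ} (hp : DependsOn p (Set.Iio J)) :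
    wordPoly φ (J + 1) p = potPoly φ * wordPoly φ J p := by
  rw [potPoly, mul_comm, wordPoly_mul φ 1 hp]
  simp

theorem sub_weightDer_wordPoly (φ : ι → ℝ) (J : ℕ) (a : ℝ) (p : (ℕ → ℝ) → ℝ) :
    C a * wordPoly φ J p - weightDer φ (wordPoly φ J p) =
      wordPoly φ J (fun ψ => (a - ∑ i ∈ Finset.range J, ψ i) * p ψ) := by
  rw [weightDer_wordPoly, ← wordPoly_const_mul]
  simp only [wordPoly, ← Finset.sum_sub_distrib, ← map_sub, sub_mul]

theorem sub_weightDer_hFun (φ : ι → ℝ) (η : ℝ) (J : ℕ)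
    (hres : ∀ t : Fin (J + 1) → ι, η ≠ ∑ i, φ (t i)) :
    C η * wordPoly φ (J + 1) (hFun (J + 1) η) - weightDer φ (wordPoly φ (J + 1) (hFun (J + 1) η)) =
      potPoly φ * ∑ x ∈ antidiagonal J,
        wordPoly φ x.1 (hFun x.1 η) * wordPoly φ x.2 (hFun x.2 η) := by
  rw [sub_weightDer_wordPoly, wordPoly_congr (q := fun ψ => ∑ x ∈ antidiagonal J,
    hFun x.1 η ψ * hFun x.2 η (fun i => ψ (i + x.1))), wordPoly_sum, Finset.mul_sum]
  · refine Finset.sum_congr rfl fun x hx => ?_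
    rw [mem_antidiagonal] at hx
    subst hx
    rw [wordPoly_mul φ _ (dependsOn_hFun η _), wordPoly_succ]
    intro ψ χ h
    simp only
    congr 1
    · exact dependsOn_hFun η _ fun i hi => h i (by simp at hi ⊢; omega)
    · exact dependsOn_hFun η _ fun i hi => h _ (by simp at hi ⊢; omega)
  · intro t
    rw [hFun_succ, sum_range_padTuple, ← mul_assoc, mul_inv_cancel₀, one_mul]
    exact sub_ne_zero.2 (hres t)

/-- Truncated generating polynomial of the rescaled functions `h_j`. -/
noncomputable def hPoly (φ : ι → ℝ) (η : ℝ) (n : ℕ) : MvPolynomial ι ℝ :=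
  ∑ j ∈ Finset.range (n + 1), C (η⁻¹ ^ j) * wordPoly φ j (hFun j η)

theorem hPoly_riccati (φ : ι → ℝ) (η : ℝ) (n : ℕ)
    (hres : ∀ J, 1 ≤ J → J ≤ n → ∀ t : Fin J → ι, η ≠ ∑ i, φ (t i)) :
    C η * (hPoly φ η n - 1) - weightDer φ (hPoly φ η n) - C η⁻¹ * potPoly φ * hPoly φ η n ^ 2 ∈
      idealOfVars ι ℝ ^ (n + 1) := by
  set w : ℕ → MvPolynomial ι ℝ := fun j => C (η⁻¹ ^ j) * wordPoly φ j (hFun j η) with hw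
  have hw0 : w 0 = 1 := by simp [hw, wordPoly_zero_left, hFun_zero]
  have hstep : ∀ j < n, C η * w (j + 1) - weightDer φ (w (j + 1)) =
      C η⁻¹ * potPoly φ * ∑ x ∈ antidiagonal j, w x.1 * w x.2 := by
    intro j hj
    have h1 : weightDer φ (w (j + 1)) =
        C (η⁻¹ ^ (j + 1)) * weightDer φ (wordPoly φ (j + 1) (hFun (j + 1) η)) := by
      simp only [hw, ← smul_eq_C_mul, Derivation.map_smul]
    have h2 : ∑ x ∈ antidiagonal j, w x.1 * w x.2 = C (η⁻¹ ^ j) * ∑ x ∈ antidiagonal j,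
        wordPoly φ x.1 (hFun x.1 η) * wordPoly φ x.2 (hFun x.2 η) := by
      rw [Finset.mul_sum]
      refine Finset.sum_congr rfl fun x hx => ?_
      rw [← mem_antidiagonal.1 hx, pow_add, map_mul]
      ring
    rw [h1, h2]
    calc _ = C (η⁻¹ ^ (j + 1)) * (C η * wordPoly φ (j + 1) (hFun (j + 1) η) -
          weightDer φ (wordPoly φ (j + 1) (hFun (j + 1) η))) := by rw [hw]; ring
      _ = _ := by
        rw [sub_weightDer_hFun φ η j (hres _ (by omega) (by omega)), pow_succ, map_mul]
        ring
  have hW : hPoly φ η n = ∑ j ∈ Finset.range (n + 1), w j := rfl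
  have hlin : C η * (hPoly φ η n - 1) - weightDer φ (hPoly φ η n) =
      C η⁻¹ * potPoly φ * ∑ j ∈ Finset.range n, ∑ x ∈ antidiagonal j, w x.1 * w x.2 := by
    have : weightDer φ (1 : MvPolynomial ι ℝ) = 0 := (weightDer φ).map_one_eq_zero
    rw [hW, Finset.sum_range_succ', hw0, add_sub_cancel_right, map_add, this, add_zero, map_sum,
      Finset.mul_sum, Finset.mul_sum, ← Finset.sum_sub_distrib]
    exact Finset.sum_congr rfl fun j hj => hstep j (Finset.mem_range.1 hj)
  rw [hlin, hW, sq, Finset.sum_mul_sum, ← mul_sub, mul_assoc, pow_succ', ← neg_sub, mul_neg]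
  refine Ideal.mul_mem_left _ _ (neg_mem (Ideal.mul_mem_mul ?_ ?_))
  · simpa [potPoly] using wordPoly_mem φ 1 fun _ => 1
  · refine sum_square_sub_sum_antidiagonal_mem _ (fun a b => w a * w b) (by omega) ?_
    intro a b hab
    refine Ideal.pow_le_pow_right hab ?_
    rw [pow_add]
    exact Ideal.mul_mem_mul (Ideal.mul_mem_left _ _ (wordPoly_mem ..))
      (Ideal.mul_mem_left _ _ (wordPoly_mem ..))

theorem hPoly_pow_recursion (φ : ι → ℝ) (η : ℝ) (n : ℕ)
    (hres : ∀ J, 1 ≤ J → J ≤ n → ∀ t : Fin J → ι, η ≠ ∑ i, φ (t i)) (K : ℕ) :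
    C ((K + 1 : ℕ) * η) * (1 - hPoly φ η n) ^ (K + 1) - weightDer φ ((1 - hPoly φ η n) ^ (K + 1)) +
      C ((K + 1 : ℕ) * η⁻¹) * potPoly φ * ((1 - hPoly φ η n) ^ K - 2 * (1 - hPoly φ η n) ^ (K + 1) +
        (1 - hPoly φ η n) ^ (K + 2)) ∈ idealOfVars ι ℝ ^ (n + 1) := by
  have h := hPoly_riccati φ η n hres
  have h1 : weightDer φ (1 : MvPolynomial ι ℝ) = 0 := (weightDer φ).map_one_eq_zero
  rw [Derivation.leibniz_pow, map_sub, h1]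
  have := Ideal.mul_mem_left _ (-((K + 1 : ℕ) : MvPolynomial ι ℝ) * (1 - hPoly φ η n) ^ K) h
  convert this using 1
  simp only [map_mul, map_natCast, smul_eq_mul, nsmul_eq_mul, add_tsub_cancel_right]
  ring

end Riccati

section Resonance

open MvPolynomial Finset.HasAntidiagonal

variable {ι : Type*} [Fintype ι]

/-- The functions `g_{J,K}`, with the convention that the coefficient at `J = K = 0` is `2`. -/
noncomputable def gExt (η : ℝ) (J K : ℕ) (ψ : ℕ → ℝ) : ℝ :=
  if K = 0 then (if J = 0 then 2 else 0) else gAux J K η ψ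

theorem dependsOn_gExt (η : ℝ) (J K : ℕ) : DependsOn (gExt η J K) (Set.Iio J) := by
  intro ψ χ h
  simp only [gExt, dependsOn_gAux η J K h]

theorem gExt_eq_zero {J K : ℕ} (h : J < K) (η : ℝ) : gExt η J K = fun _ => 0 := by
  funext ψ
  rw [gExt, if_neg (by omega), gAux_eq_zero (Or.inr (by exact_mod_cast h))]

theorem omegaCoef_sum (F : ℤ → ℝ) :
    ∑ a ∈ ({-1, 0, 1} : Finset ℤ), omegaCoef a * F a =
      1 / 2 * F (-1) - F 0 + 1 / 2 * F 1 := by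
  rw [Finset.sum_insert (by decide), Finset.sum_insert (by decide), Finset.sum_singleton]
  simp [omegaCoef]
  ring

theorem wordPoly_fAux_succ (φ : ι → ℝ) (η : ℝ) (J K : ℕ) :
    wordPoly φ (J + 1) (fAux (J + 1) ((K + 1 : ℕ) : ℤ) η) =
      C (η⁻¹ / 2) * potPoly φ * (wordPoly φ J (gExt η J K) - 2 * wordPoly φ J (gExt η J (K + 1)) +
        wordPoly φ J (gExt η J (K + 2))) := by
  have hR : wordPoly φ J (gExt η J K) - 2 * wordPoly φ J (gExt η J (K + 1)) +
        wordPoly φ J (gExt η J (K + 2)) = wordPoly φ J (fun ψ =>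
          gExt η J K ψ - 2 * gExt η J (K + 1) ψ + gExt η J (K + 2) ψ) := by
    rw [show (2 : MvPolynomial ι ℝ) = C 2 from (map_ofNat C 2).symm, ← wordPoly_const_mul]
    simp only [wordPoly, ← Finset.sum_sub_distrib, ← Finset.sum_add_distrib, ← map_sub, ← map_add]
  have hdep : DependsOn (fun ψ => gExt η J K ψ - 2 * gExt η J (K + 1) ψ + gExt η J (K + 2) ψ)
      (Set.Iio J) := by
    intro ψ χ h
    simp only [dependsOn_gExt η J _ h]
  rw [hR, mul_assoc, ← wordPoly_succ φ hdep, ← wordPoly_const_mul]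
  rcases J with _ | J
  · refine wordPoly_congr fun t => ?_
    rw [fAux_one, if_neg (by omega)]
    rcases K with _ | K
    · rw [if_pos (by simp), gExt_eq_zero (K := 0 + 1) (by omega),
        gExt_eq_zero (K := 0 + 2) (by omega)]
      simp [gExt]
    · rw [if_neg (by omega), gExt_eq_zero (by omega), gExt_eq_zero (by omega),
        gExt_eq_zero (by omega)]
      simp
  · refine wordPoly_average φ (J + 2) _ _ fun t => ?_
    have hg : ∀ ψ, gExt η (J + 1) K ψ = gAux (J + 1) K η ψ := by
      intro ψ
      rcases eq_or_ne K 0 with rfl | h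
      · rw [gAux_eq_zero (by simp)]; simp [gExt]
      · simp [gExt, h]
    by_cases hK : K ≤ J + 1
    · rw [fAux_padTuple _ (by push_cast; omega), omegaCoef_sum]
      simp only [hg]
      rw [← Finset.mul_sum, Finset.sum_add_distrib, Finset.sum_sub_distrib, ← Finset.mul_sum]
      have e1 : ((K + 1 : ℕ) : ℤ) + -1 = K := by push_cast; ring
      have e2 : ((K + 1 : ℕ) : ℤ) + 1 = (K + 2 : ℕ) := by push_cast; ring
      rw [e1, e2, add_zero]
      simp only [gExt, Nat.add_eq_zero_iff, one_ne_zero, and_false, if_false,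
        OfNat.ofNat_ne_zero]
      ring
    · rw [fAux_eq_zero (by push_cast; omega), gExt_eq_zero (by omega), gExt_eq_zero (by omega),
        gExt_eq_zero (by omega)]
      simp

/-- Truncated generating polynomial of the functions `g_{J,K}`. -/
noncomputable def gPoly (φ : ι → ℝ) (η : ℝ) (n K : ℕ) : MvPolynomial ι ℝ :=
  ∑ j ∈ Finset.range (n + 1), wordPoly φ j (gExt η j K)

theorem gPoly_zero (φ : ι → ℝ) (η : ℝ) (n : ℕ) : gPoly φ η n 0 = 2 := by
  rw [gPoly, Finset.sum_range_succ', wordPoly_zero_left, Finset.sum_eq_zero]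
  · simpa [gExt] using map_ofNat (C : ℝ →+* MvPolynomial ι ℝ) 2
  · intro j _
    have : gExt η (j + 1) 0 = fun _ => 0 := by funext ψ; simp [gExt]
    rw [this, wordPoly_zero_right]

theorem gPoly_recursion (φ : ι → ℝ) (η : ℝ) (n : ℕ)
    (hres : ∀ K J : ℕ, 1 ≤ K → K ≤ J → J ≤ n → ∀ t : Fin J → ι, (K : ℝ) * η ≠ ∑ i, φ (t i))
    (K : ℕ) :
    C ((K + 1 : ℕ) * η) * gPoly φ η n (K + 1) - weightDer φ (gPoly φ η n (K + 1)) +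
      C ((K + 1 : ℕ) * η⁻¹) * potPoly φ * (gPoly φ η n K - 2 * gPoly φ η n (K + 1) +
        gPoly φ η n (K + 2)) ∈ idealOfVars ι ℝ ^ (n + 1) := by
  have h1 : ∀ j ≤ n, C ((K + 1 : ℕ) * η) * wordPoly φ j (gExt η j (K + 1)) -
      weightDer φ (wordPoly φ j (gExt η j (K + 1))) =
        C (-2 * ((K + 1 : ℕ) : ℝ)) * wordPoly φ j (fAux j ((K + 1 : ℕ) : ℤ) η) := by
    intro j hj
    rw [sub_weightDer_wordPoly, ← wordPoly_const_mul]
    refine wordPoly_congr fun t => ?_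
    by_cases hK : K + 1 ≤ j
    · rw [gExt, if_neg (by omega), gAux, sum_range_padTuple]
      have := sub_ne_zero.2 (hres (K + 1) j (by omega) hK hj t)
      simp only [Int.cast_natCast, Function.comp_apply]
      field_simp
    · rw [gExt_eq_zero (by omega), fAux_eq_zero (by push_cast; omega)]
      simp
  set d : ℕ → MvPolynomial ι ℝ := fun j => wordPoly φ j (gExt η j K) -
    2 * wordPoly φ j (gExt η j (K + 1)) + wordPoly φ j (gExt η j (K + 2)) with hd
  have h2 : C ((K + 1 : ℕ) * η) * gPoly φ η n (K + 1) - weightDer φ (gPoly φ η n (K + 1)) =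
      - (C ((K + 1 : ℕ) * η⁻¹) * potPoly φ * ∑ j ∈ Finset.range n, d j) := by
    rw [gPoly, map_sum, Finset.mul_sum, ← Finset.sum_sub_distrib,
      Finset.sum_congr rfl fun j hj => h1 j (by simp at hj; omega), Finset.sum_range_succ']
    have h0 : wordPoly φ 0 (fAux 0 ((K + 1 : ℕ) : ℤ) η) = 0 := by
      rw [wordPoly_zero_left, fAux_zero, map_zero]
    rw [h0, mul_zero, add_zero, Finset.mul_sum, ← Finset.sum_neg_distrib]
    refine Finset.sum_congr rfl fun j _ => ?_
    rw [wordPoly_fAux_succ, ← mul_assoc, ← mul_assoc, ← map_mul, ← neg_mul, ← neg_mul, ← map_neg]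
    congr 3
    ring
  have h3 : gPoly φ η n K - 2 * gPoly φ η n (K + 1) + gPoly φ η n (K + 2) =
      ∑ j ∈ Finset.range (n + 1), d j := by
    simp only [gPoly, hd, Finset.mul_sum, Finset.sum_sub_distrib, Finset.sum_add_distrib]
  rw [h2, h3, Finset.sum_range_succ, mul_add, neg_add_cancel_left, mul_assoc, pow_succ']
  refine Ideal.mul_mem_left _ _ (Ideal.mul_mem_mul ?_ ?_)
  · simpa [potPoly] using wordPoly_mem φ 1 fun _ => 1
  · refine add_mem (sub_mem ?_ (Ideal.mul_mem_left _ _ ?_)) ?_ <;> exact wordPoly_mem ..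

theorem coeff_potPoly_mul_eq_zero (φ : ι → ℝ) (Q : MvPolynomial ι ℝ) (m : ι →₀ ℕ)
    (h : ∀ m' : ι →₀ ℕ, m'.degree < m.degree → coeff m' Q = 0) :
    coeff m (potPoly φ * Q) = 0 := by
  classical
  rw [potPoly, wordPoly, Finset.sum_mul, coeff_sum]
  refine Finset.sum_eq_zero fun t _ => ?_
  rw [coeff_monomial_mul']
  split_ifs with hle
  · rw [h, mul_zero]
    have := congrArg Finsupp.degree (tsub_add_cancel_of_le hle)
    rw [map_add, degree_tupleExp] at this
    omega
  · rfl

theorem one_sub_hPoly_mem (φ : ι → ℝ) (η : ℝ) (n : ℕ) :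
    1 - hPoly φ η n ∈ idealOfVars ι ℝ := by
  rw [hPoly, Finset.sum_range_succ', wordPoly_zero_left, hFun_zero]
  simp only [pow_zero, map_one, mul_one, sub_add_cancel_right, neg_mem_iff]
  exact Ideal.sum_mem _ fun j _ => Ideal.mul_mem_left _ _
    (Ideal.pow_le_self (Nat.succ_ne_zero j) (wordPoly_mem ..))

theorem gPoly_mem (φ : ι → ℝ) (η : ℝ) (n K : ℕ) : gPoly φ η n K ∈ idealOfVars ι ℝ ^ K := by
  refine Ideal.sum_mem _ fun j _ => ?_
  by_cases hj : j < K
  · rw [gExt_eq_zero hj, wordPoly_zero_right]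
    exact zero_mem _
  · exact Ideal.pow_le_pow_right (not_lt.1 hj) (wordPoly_mem ..)

theorem coeff_gPoly (φ : ι → ℝ) (η : ℝ) (n : ℕ)
    (hres : ∀ K J : ℕ, 1 ≤ K → K ≤ J → J ≤ n → ∀ t : Fin J → ι, (K : ℝ) * η ≠ ∑ i, φ (t i))
    (d : ℕ) (hd : d ≤ n) (m : ι →₀ ℕ) (hm : m.degree = d) (K : ℕ) :
    coeff m (gPoly φ η n K) = coeff m (2 * (1 - hPoly φ η n) ^ K) := by
  induction d using Nat.strong_induction_on generalizing m K with
  | _ d ih =>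
    rcases K with _ | K
    · rw [gPoly_zero, pow_zero, mul_one]
    by_cases hK : d < K + 1
    · rw [(mem_pow_idealOfVars_iff' _ _).1 (gPoly_mem φ η n (K + 1)) m (by omega),
        (mem_pow_idealOfVars_iff' _ _).1 (Ideal.mul_mem_left _ 2
          (Ideal.pow_mem_pow (one_sub_hPoly_mem φ η n) (K + 1))) m (by omega)]
    · have hres1 : ∀ J, 1 ≤ J → J ≤ n → ∀ t : Fin J → ι, η ≠ ∑ i, φ (t i) := by
        intro J h1 h2 t
        simpa using hres 1 J le_rfl h1 h2 t
      set U := 1 - hPoly φ η n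
      set Δ : ℕ → MvPolynomial ι ℝ := fun k => gPoly φ η n k - 2 * U ^ k with hΔ
      have hrec : C ((K + 1 : ℕ) * η) * Δ (K + 1) - weightDer φ (Δ (K + 1)) +
          C ((K + 1 : ℕ) * η⁻¹) * (potPoly φ * (Δ K - 2 * Δ (K + 1) + Δ (K + 2))) ∈
            idealOfVars ι ℝ ^ (n + 1) := by
        have h1 := gPoly_recursion φ η n hres K
        have h2 := Ideal.mul_mem_left _ 2 (hPoly_pow_recursion φ η n hres1 K)
        convert sub_mem h1 h2 using 1
        have h2' : weightDer φ (2 * U ^ (K + 1)) = 2 * weightDer φ (U ^ (K + 1)) := by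
          rw [two_mul, map_add, two_mul]
        simp only [hΔ, map_sub, h2']
        ring
      have hc := (mem_pow_idealOfVars_iff' _ _).1 hrec m (by omega)
      have hz : ∀ m' : ι →₀ ℕ, m'.degree < m.degree → ∀ k, coeff m' (Δ k) = 0 := by
        intro m' hm' k
        rw [hΔ, coeff_sub, ih m'.degree (by omega) (by omega) m' rfl k, sub_self]
      rw [coeff_add, coeff_sub, coeff_C_mul, coeff_C_mul, coeff_weightDer,
        coeff_potPoly_mul_eq_zero, mul_zero, add_zero, ← sub_mul] at hc
      · obtain ⟨t, rfl⟩ := exists_tupleExp_eq d m hm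
        rw [linearCombination_tupleExp] at hc
        have := (mul_eq_zero.1 hc).resolve_left
          (sub_ne_zero.2 (hres (K + 1) d (by omega) (by omega) hd t))
        rwa [hΔ, coeff_sub, sub_eq_zero] at this
      · intro m' hm'
        rw [two_mul, coeff_add, coeff_sub, coeff_add, hz m' hm', hz m' hm', hz m' hm']
        simp

/-- The word functions of the powers of the generating series of `-η^{-j} h_j`, `j ≥ 1`. -/
noncomputable def hPowFun (η : ℝ) : ℕ → ℕ → (ℕ → ℝ) → ℝ
  | 0, J, _ => if J = 0 then 1 else 0
  | K + 1, J, ψ => ∑ x ∈ antidiagonal J, (if x.1 = 0 then 0 else -η⁻¹ ^ x.1 * hFun x.1 η ψ) *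
      hPowFun η K x.2 (fun i => ψ (i + x.1))

theorem hPoly_pow_sub_mem (φ : ι → ℝ) (η : ℝ) (n K : ℕ) :
    (1 - hPoly φ η n) ^ K - ∑ j ∈ Finset.range (n + 1), wordPoly φ j (hPowFun η K j) ∈
      idealOfVars ι ℝ ^ (n + 1) := by
  set v : ℕ → (ℕ → ℝ) → ℝ := fun a ψ => if a = 0 then 0 else -η⁻¹ ^ a * hFun a η ψ with hv
  have hU : 1 - hPoly φ η n = ∑ a ∈ Finset.range (n + 1), wordPoly φ a (v a) := by
    rw [hPoly, Finset.sum_range_succ', Finset.sum_range_succ', wordPoly_zero_left,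
      wordPoly_zero_left, hFun_zero]
    simp only [pow_zero, map_one, mul_one, sub_add_cancel_right, hv, if_true, map_zero, add_zero,
      ← Finset.sum_neg_distrib, Nat.add_eq_zero_iff, one_ne_zero, and_false, if_false]
    refine Finset.sum_congr rfl fun j _ => ?_
    rw [wordPoly_const_mul, map_neg, neg_mul]
  induction K with
  | zero =>
    rw [Finset.sum_range_succ', wordPoly_zero_left, Finset.sum_eq_zero]
    · simp [hPowFun]
    · intro j _
      have : hPowFun η 0 (j + 1) = fun _ => 0 := by funext ψ; simp [hPowFun]
      rw [this, wordPoly_zero_right]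
  | succ K ih =>
    have h1 := Ideal.mul_mem_left _ (1 - hPoly φ η n) ih
    have h2 := sum_square_sub_sum_antidiagonal_mem (idealOfVars ι ℝ ^ (n + 1))
      (fun a b => wordPoly φ a (v a) * wordPoly φ b (hPowFun η K b)) le_rfl (by
        intro a b hab
        refine Ideal.pow_le_pow_right hab ?_
        rw [pow_add]
        exact Ideal.mul_mem_mul (wordPoly_mem ..) (wordPoly_mem ..))
    rw [← Finset.sum_mul_sum, ← hU] at h2
    convert add_mem h1 h2 using 1
    rw [pow_succ', mul_sub, sub_add_sub_cancel]
    congr 1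
    refine Finset.sum_congr rfl fun j _ => ?_
    have : hPowFun η (K + 1) j = fun ψ => ∑ x ∈ antidiagonal j,
        v x.1 ψ * hPowFun η K x.2 (fun i => ψ (i + x.1)) := by
      funext ψ; rw [hPowFun]
    rw [this, wordPoly_sum]
    refine Finset.sum_congr rfl fun x hx => ?_
    rw [wordPoly_mul, mem_antidiagonal.1 hx]
    intro ψ χ h
    simp only [hv, dependsOn_hFun η x.1 h]

/-- The symmetrization of `2 * hPowFun` is `g`. -/
theorem factorial_mul_gAux (φ : ℕ → ℝ) (η : ℝ) (n : ℕ)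
    (hres : ∀ K J : ℕ, 1 ≤ K → K ≤ J → J ≤ n → ∀ t : Fin J → ℕ, (K : ℝ) * η ≠ ∑ i, φ (t i))
    {J K : ℕ} (hJ : J ≤ n) (hK : 1 ≤ K) (t : Fin J → ℕ) :
    (Nat.factorial J : ℝ) * gAux J K η (padFin J φ t) =
      2 * ∑ σ : Equiv.Perm (Fin J), hPowFun η K J (padFin J φ (t ∘ σ)) := by
  set w : Fin J → ℝ := φ ∘ t
  have hdeg : (tupleExp (id : Fin J → Fin J)).degree = J := degree_tupleExp _
  have h1 := coeff_gPoly w η n (fun K J h1 h2 h3 s => hres K J h1 h2 h3 (t ∘ s)) J hJ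
    (tupleExp id) hdeg K
  have h2 := (mem_pow_idealOfVars_iff' _ _).1 (hPoly_pow_sub_mem w η n K) (tupleExp id)
    (by omega)
  have h3 : ∀ p : ℕ → (ℕ → ℝ) → ℝ,
      coeff (tupleExp id) (∑ j ∈ Finset.range (n + 1), wordPoly w j (p j)) =
        ∑ σ : Equiv.Perm (Fin J), p J (padTuple (w ∘ σ)) := by
    intro p
    rw [coeff_sum, Finset.sum_eq_single J, coeff_wordPoly_id]
    · exact fun j _ hj => coeff_wordPoly_of_degree_ne _ _ (by omega)
    · intro h; simp at h; omega
  rw [coeff_sub, h3, sub_eq_zero] at h2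
  rw [two_mul, coeff_add, h2, gPoly, h3, ← two_mul] at h1
  have h4 : ∀ σ : Equiv.Perm (Fin J), gExt η J K (padTuple (w ∘ σ)) =
      gAux J K η (padTuple w) := by
    intro σ
    rw [gExt, if_neg (by omega), gAux_padTuple_comp_perm]
  simp only [h4, Finset.sum_const, Finset.card_univ, Fintype.card_perm, Fintype.card_fin,
    nsmul_eq_mul] at h1
  exact h1

end Resonance

section WordSums

open Finset.HasAntidiagonal

/-- Absolute summability of `c_{m_1} ⋯ c_{m_J} p (φ_{m_1}, …, φ_{m_J})` over all tuples `m`. -/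
def WordSummable (c : ℕ → ℂ) (φ : ℕ → ℝ) (J : ℕ) (p : (ℕ → ℝ) → ℝ) : Prop :=
  Summable fun m : Fin J → ℕ => ‖∏ i, c (m i)‖ * |p (padFin J φ m)|

/-- The sum of `p (φ_{m_1}, …, φ_{m_J}) b_{m_1} ⋯ b_{m_J}` over all tuples `m`. -/
noncomputable def wordSum (b : ℕ → ℂ) (φ : ℕ → ℝ) (J : ℕ) (p : (ℕ → ℝ) → ℝ) : ℂ :=
  ∑' m : Fin J → ℕ, (p (padFin J φ m) : ℂ) * ∏ i, b (m i)

variable {c : ℕ → ℂ} {φ : ℕ → ℝ}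

theorem WordSummable.summable {J : ℕ} {p : (ℕ → ℝ) → ℝ} (h : WordSummable c φ J p) :
    Summable fun m : Fin J → ℕ => (p (padFin J φ m) : ℂ) * ∏ i, c (m i) := by
  refine Summable.of_norm (h.congr fun m => ?_)
  rw [norm_mul, Complex.norm_real, Real.norm_eq_abs, mul_comm]

theorem WordSummable.const_mul {J : ℕ} {p : (ℕ → ℝ) → ℝ} (a : ℝ) (h : WordSummable c φ J p) :
    WordSummable c φ J fun ψ => a * p ψ :=
  (h.mul_left |a|).congr fun m => by rw [abs_mul]; ring

theorem WordSummable.of_le {J : ℕ} {p q : (ℕ → ℝ) → ℝ} (h : WordSummable c φ J p)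
    (hq : ∀ m : Fin J → ℕ, |q (padFin J φ m)| ≤ |p (padFin J φ m)|) : WordSummable c φ J q :=
  Summable.of_nonneg_of_le (fun _ => by positivity)
    (fun m => mul_le_mul_of_nonneg_left (hq m) (norm_nonneg _)) h

theorem WordSummable.sum {κ : Type*} {s : Finset κ} {J : ℕ} {p : κ → (ℕ → ℝ) → ℝ}
    (h : ∀ k ∈ s, WordSummable c φ J (p k)) : WordSummable c φ J fun ψ => ∑ k ∈ s, p k ψ := by
  refine Summable.of_nonneg_of_le (fun _ => by positivity) (fun m => ?_) (summable_sum h)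
  rw [← Finset.mul_sum]
  exact mul_le_mul_of_nonneg_left (Finset.abs_sum_le_sum_abs _ _) (norm_nonneg _)

theorem WordSummable.scale {b : ℕ → ℂ} {M : ℝ} (hb : ∀ k, ‖b k‖ ≤ M * ‖c k‖) {J : ℕ}
    {p : (ℕ → ℝ) → ℝ} (h : WordSummable c φ J p) : WordSummable b φ J p := by
  refine Summable.of_nonneg_of_le (fun _ => by positivity) (fun m => ?_) (h.mul_left (M ^ J))
  rw [← mul_assoc]
  refine mul_le_mul_of_nonneg_right ?_ (abs_nonneg _)
  rw [norm_prod, norm_prod]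
  calc _ ≤ ∏ i, (M * ‖c (m i)‖) := Finset.prod_le_prod (fun _ _ => norm_nonneg _) fun i _ => hb _
    _ = _ := by rw [Finset.prod_mul_distrib]; simp

theorem padFin_append_of_lt {I J : ℕ} (u : Fin I → ℕ) (v : Fin J → ℕ) {i : ℕ} (h : i < I) :
    padFin (I + J) φ (Fin.append u v) i = padFin I φ u i := by
  change padTuple (φ ∘ Fin.append u v) i = padTuple (φ ∘ u) i
  rw [append_comp, padTuple_append_of_lt _ _ h]

theorem padFin_append_add {I J : ℕ} (u : Fin I → ℕ) (v : Fin J → ℕ) :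
    (fun i => padFin (I + J) φ (Fin.append u v) (i + I)) = padFin J φ v := by
  change (fun i => padTuple (φ ∘ Fin.append u v) (i + I)) = padTuple (φ ∘ v)
  rw [append_comp, padTuple_append_add]

theorem WordSummable.mul {I J : ℕ} {p q : (ℕ → ℝ) → ℝ} (hdep : DependsOn p (Set.Iio I))
    (hp : WordSummable c φ I p) (hq : WordSummable c φ J q) :
    WordSummable c φ (I + J) fun ψ => p ψ * q (fun i => ψ (i + I)) := by
  refine (Fin.appendEquiv I J).summable_iff.1 ((Summable.mul_of_nonneg hp hq
    (fun _ => by positivity) (fun _ => by positivity)).congr fun uv => ?_)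
  have e : Fin.appendEquiv I J uv = Fin.append uv.1 uv.2 := rfl
  rw [Function.comp_apply, e]
  beta_reduce
  rw [padFin_append_add, Fin.prod_univ_add,
    hdep fun i hi => padFin_append_of_lt uv.1 uv.2 hi]
  simp only [Fin.append_left, Fin.append_right, norm_mul, abs_mul]
  ring

theorem wordSum_mul {I J : ℕ} {p q : (ℕ → ℝ) → ℝ} (hdep : DependsOn p (Set.Iio I))
    (hp : WordSummable c φ I p) (hq : WordSummable c φ J q) :
    wordSum c φ I p * wordSum c φ J q =
      wordSum c φ (I + J) fun ψ => p ψ * q (fun i => ψ (i + I)) := by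
  rw [wordSum, wordSum, tsum_mul_tsum_of_summable_norm hp.summable.norm hq.summable.norm, wordSum,
    ← (Fin.appendEquiv I J).tsum_eq]
  refine tsum_congr fun uv => ?_
  have e : Fin.appendEquiv I J uv = Fin.append uv.1 uv.2 := rfl
  rw [e, padFin_append_add, Fin.prod_univ_add,
    hdep fun i hi => padFin_append_of_lt uv.1 uv.2 hi]
  simp only [Fin.append_left, Fin.append_right, Complex.ofReal_mul]
  ring

/-- Precomposition of tuples with a permutation. -/
def permTuple {J : ℕ} (σ : Equiv.Perm (Fin J)) : (Fin J → ℕ) ≃ (Fin J → ℕ) where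
  toFun m := m ∘ σ
  invFun m := m ∘ σ.symm
  left_inv m := by funext i; simp
  right_inv m := by funext i; simp

theorem prod_permTuple {J : ℕ} (σ : Equiv.Perm (Fin J)) (m : Fin J → ℕ) :
    ∏ i, c (permTuple σ m i) = ∏ i, c (m i) :=
  Equiv.prod_comp σ fun i => c (m i)

theorem WordSummable.perm {J : ℕ} {p : (ℕ → ℝ) → ℝ} (h : WordSummable c φ J p)
    (σ : Equiv.Perm (Fin J)) :
    Summable fun m : Fin J → ℕ => ‖∏ i, c (m i)‖ * |p (padFin J φ (m ∘ σ))| :=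
  ((permTuple σ).summable_iff.2 h).congr fun m => by
    rw [Function.comp_apply, prod_permTuple]; rfl

theorem WordSummable.average {J : ℕ} {p q : (ℕ → ℝ) → ℝ} (h : WordSummable c φ J p) (a : ℝ)
    (hq : ∀ m : Fin J → ℕ, q (padFin J φ m) =
      a * ∑ σ : Equiv.Perm (Fin J), p (padFin J φ (m ∘ σ))) : WordSummable c φ J q := by
  refine Summable.of_nonneg_of_le (fun _ => by positivity) (fun m => ?_)
    ((summable_sum (s := Finset.univ) fun σ _ => h.perm σ).mul_left |a|)
  rw [hq, abs_mul, ← Finset.mul_sum, mul_left_comm]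
  gcongr
  exact Finset.abs_sum_le_sum_abs _ _

theorem wordSum_average {J : ℕ} {p q : (ℕ → ℝ) → ℝ} (h : WordSummable c φ J p)
    (hq : ∀ m : Fin J → ℕ, q (padFin J φ m) = (Nat.factorial J : ℝ)⁻¹ *
      ∑ σ : Equiv.Perm (Fin J), p (padFin J φ (m ∘ σ))) : wordSum c φ J q = wordSum c φ J p := by
  have hsum : ∀ σ : Equiv.Perm (Fin J), HasSum (fun m : Fin J → ℕ =>
      (p (padFin J φ (m ∘ σ)) : ℂ) * ∏ i, c (m i)) (wordSum c φ J p) := fun σ => by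
    have := (permTuple σ).hasSum_iff.2 h.summable.hasSum
    simp only [Function.comp_def, prod_permTuple] at this
    exact this
  have := ((hasSum_sum (s := Finset.univ) fun σ _ => hsum σ).mul_left
    ((Nat.factorial J : ℂ)⁻¹)).tsum_eq
  rw [Finset.sum_const, Finset.card_univ, Fintype.card_perm, Fintype.card_fin, nsmul_eq_mul,
    inv_mul_cancel_left₀ (Nat.cast_ne_zero.2 (Nat.factorial_ne_zero J))] at this
  rw [← this, wordSum]
  refine tsum_congr fun m => ?_
  rw [hq]
  push_cast
  rw [← Finset.sum_mul, mul_assoc]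

theorem wordSummable_zero (p : (ℕ → ℝ) → ℝ) : WordSummable c φ 0 p :=
  summable_of_hasFiniteSupport (Set.toFinite _)

theorem wordSummable_one (hc : Summable fun k => ‖c k‖) : WordSummable c φ 1 fun _ => 1 := by
  refine ((Equiv.funUnique (Fin 1) ℕ).summable_iff.2 hc).congr fun m => ?_
  simp

theorem wordSum_one : wordSum c φ 1 (fun _ => 1) = ∑' k, c k := by
  rw [wordSum, ← (Equiv.funUnique (Fin 1) ℕ).tsum_eq]
  refine tsum_congr fun m => ?_
  simp

theorem wordSummable_hPowFun {η : ℝ} {n : ℕ}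
    (h : ∀ j, 1 ≤ j → j ≤ n → WordSummable c φ j (hFun j η)) (K J : ℕ) (hJ : J ≤ n) :
    WordSummable c φ J (hPowFun η K J) := by
  induction K generalizing J with
  | zero =>
    rcases J with _ | J
    · exact wordSummable_zero _
    · have : hPowFun η 0 (J + 1) = fun _ => 0 := by funext ψ; simp [hPowFun]
      rw [this]
      simp [WordSummable, summable_zero]
  | succ K ih =>
    have : hPowFun η (K + 1) J = fun ψ => ∑ x ∈ antidiagonal J,
        (if x.1 = 0 then 0 else -η⁻¹ ^ x.1 * hFun x.1 η ψ) *
          hPowFun η K x.2 (fun i => ψ (i + x.1)) := by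
      funext ψ; rw [hPowFun]
    rw [this]
    refine WordSummable.sum fun x hx => ?_
    have hx' := mem_antidiagonal.1 hx
    subst hx'
    refine WordSummable.mul ?_ ?_ (ih _ (by omega))
    · intro ψ χ hψ
      simp only [dependsOn_hFun η x.1 hψ]
    · rcases Nat.eq_zero_or_pos x.1 with h0 | h0
      · rw [h0]; exact wordSummable_zero _
      · simp only [h0.ne', if_false]
        exact (h _ h0 (by omega)).const_mul _

theorem wordSummable_gAux {η : ℝ} {n : ℕ}
    (h : ∀ j, 1 ≤ j → j ≤ n → WordSummable c φ j (hFun j η))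
    (hres : ∀ K J : ℕ, 1 ≤ K → K ≤ J → J ≤ n → ∀ t : Fin J → ℕ, (K : ℝ) * η ≠ ∑ i, φ (t i))
    (K : ℤ) (J : ℕ) (hJ : J ≤ n) : WordSummable c φ J (gAux J K η) := by
  by_cases hK : K ≤ 0
  · have : gAux J K η = fun _ => 0 := funext fun ψ => gAux_eq_zero (Or.inl hK) η ψ
    rw [this]
    simp [WordSummable, summable_zero]
  lift K to ℕ using by omega
  refine (wordSummable_hPowFun h K J hJ).average ((Nat.factorial J : ℝ)⁻¹ * 2) fun m => ?_
  rw [mul_assoc, ← factorial_mul_gAux φ η n hres hJ (by omega) m,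
    inv_mul_cancel_left₀ (Nat.cast_ne_zero.2 (Nat.factorial_ne_zero J))]

theorem fAux_padFin {J : ℕ} (K : ℤ) (hK : 0 ≤ K ∧ K ≤ (J : ℤ) + 2) (η : ℝ) (m : Fin (J + 2) → ℕ) :
    fAux (J + 2) K η (padFin (J + 2) φ m) = (Nat.factorial (J + 2) : ℝ)⁻¹ *
      ∑ σ : Equiv.Perm (Fin (J + 2)), (fun ψ => η⁻¹ * (1 / 2 * gAux (J + 1) (K - 1) η ψ -
        gAux (J + 1) K η ψ + 1 / 2 * gAux (J + 1) (K + 1) η ψ)) (padFin (J + 2) φ (m ∘ σ)) := by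
  change fAux (J + 2) K η (padTuple (φ ∘ m)) = _
  rw [fAux_padTuple K hK, omegaCoef_sum]
  simp only [← Finset.mul_sum, Finset.sum_add_distrib, Finset.sum_sub_distrib, add_zero,
    ← sub_eq_add_neg]
  have : ∀ σ : Equiv.Perm (Fin (J + 2)), padFin (J + 2) φ (m ∘ σ) = padTuple ((φ ∘ m) ∘ σ) :=
    fun _ => rfl
  simp only [this]
  ring

/-- Local form of `(gAux J (K-1) - 2 gAux J K + gAux J (K+1)) / (2 η)`. -/
theorem dependsOn_gAux_diff (η : ℝ) (J : ℕ) (K : ℤ) : DependsOn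
    (fun ψ => η⁻¹ * (1 / 2 * gAux J (K - 1) η ψ - gAux J K η ψ + 1 / 2 * gAux J (K + 1) η ψ))
    (Set.Iio J) := by
  intro ψ χ h
  simp only [dependsOn_gAux η J _ h]

theorem wordSummable_gAux_diff {η : ℝ} {J : ℕ} (hg : ∀ K : ℤ, WordSummable c φ J (gAux J K η))
    (K : ℤ) : WordSummable c φ J
    (fun ψ => η⁻¹ * (1 / 2 * gAux J (K - 1) η ψ - gAux J K η ψ + 1 / 2 * gAux J (K + 1) η ψ)) := by
  have := WordSummable.sum (s := Finset.univ) (c := c) (φ := φ) (J := J)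
    (p := ![fun ψ => 1 / 2 * gAux J (K - 1) η ψ, fun ψ => -1 * gAux J K η ψ,
      fun ψ => 1 / 2 * gAux J (K + 1) η ψ]) (fun k _ => by
        fin_cases k <;> exact (hg _).const_mul _)
  refine WordSummable.const_mul _ (this.of_le fun m => le_of_eq ?_)
  simp [Fin.sum_univ_three, sub_eq_add_neg]

theorem wordSummable_fAux_succ (hc : Summable fun k => ‖c k‖) {η : ℝ} {J : ℕ}
    (hg : ∀ K : ℤ, WordSummable c φ J (gAux J K η)) (K : ℤ) :
    WordSummable c φ (J + 1) (fAux (J + 1) K η) := by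
  rcases J with _ | J
  · refine ((wordSummable_one (φ := φ) hc).const_mul (fAux 1 K η fun _ => 0)).of_le fun m => ?_
    simp [fAux_one]
  · by_cases hK : 0 ≤ K ∧ K ≤ (J : ℤ) + 2
    · have := ((wordSummable_gAux_diff hg K).mul (dependsOn_gAux_diff η _ K)
        (wordSummable_one (φ := φ) hc))
      simp only [mul_one] at this
      exact this.average _ (fAux_padFin K hK η)
    · have : fAux (J + 2) K η = fun _ => 0 := by
        funext ψ; rw [fAux_add_two, if_neg hK]
      rw [this]
      simp [WordSummable, summable_zero]

theorem wordSum_fAux_succ (hc : Summable fun k => ‖c k‖) {η : ℝ} {J : ℕ}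
    (hg : ∀ K : ℤ, WordSummable c φ (J + 1) (gAux (J + 1) K η)) (K : ℤ)
    (hK : 0 ≤ K ∧ K ≤ (J : ℤ) + 2) :
    wordSum c φ (J + 2) (fAux (J + 2) K η) = (η : ℂ)⁻¹ *
      (1 / 2 * wordSum c φ (J + 1) (gAux (J + 1) (K - 1) η) -
        wordSum c φ (J + 1) (gAux (J + 1) K η) +
        1 / 2 * wordSum c φ (J + 1) (gAux (J + 1) (K + 1) η)) * ∑' k, c k := by
  have h1 := wordSummable_gAux_diff hg K
  have h2 := h1.mul (dependsOn_gAux_diff η _ K) (wordSummable_one (φ := φ) hc)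
  have h3 := wordSum_mul (dependsOn_gAux_diff η _ K) h1 (wordSummable_one (φ := φ) hc)
  simp only [mul_one] at h2 h3
  rw [wordSum_average h2 (fAux_padFin K hK η), ← h3, wordSum_one]
  congr 1
  have := ((((hg (K - 1)).summable.hasSum.mul_left (1 / 2)).sub (hg K).summable.hasSum).add
    ((hg (K + 1)).summable.hasSum.mul_left (1 / 2))).mul_left (η : ℂ)⁻¹
  rw [wordSum, wordSum, wordSum, wordSum, ← this.tsum_eq]
  refine tsum_congr fun m => ?_
  push_cast
  ring

theorem sum_shift_eq (G : ℤ → ℂ) (J : ℕ) (h0 : ∀ K ≤ 0, G K = 0) (h1 : ∀ K > (J : ℤ), G K = 0)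
    {z : ℂ} (hz : z ≠ 0) :
    ∑ K ∈ Finset.range (J + 2), (1 / 2 * G (K - 1) - G K + 1 / 2 * G (K + 1)) * z ^ K =
      ((z + z⁻¹) / 2 - 1) * ∑ K ∈ Finset.Icc 1 J, G K * z ^ K := by
  have e : ∑ K ∈ Finset.Icc 1 J, G K * z ^ K =
      ∑ K ∈ Finset.range J, G (K + 1 : ℕ) * z ^ (K + 1) := by
    rw [Finset.range_eq_Ico, Finset.sum_Ico_add' (fun K : ℕ => G K * z ^ K) 0 J 1]
    rfl
  have s1 : ∑ K ∈ Finset.range (J + 2), G (K - 1) * z ^ K =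
      z * ∑ K ∈ Finset.range J, G (K + 1 : ℕ) * z ^ (K + 1) := by
    rw [Finset.sum_range_succ', Finset.sum_range_succ', Finset.mul_sum]
    rw [h0 _ (by simp), h0 _ (by simp)]
    simp only [zero_mul, add_zero]
    refine Finset.sum_congr rfl fun K _ => ?_
    rw [show ((K + 1 + 1 : ℕ) : ℤ) - 1 = (K + 1 : ℕ) by push_cast; ring]
    ring
  have s2 : ∑ K ∈ Finset.range (J + 2), G K * z ^ K =
      ∑ K ∈ Finset.range J, G (K + 1 : ℕ) * z ^ (K + 1) := by
    rw [Finset.sum_range_succ', Finset.sum_range_succ, h0 (0 : ℕ) (by simp),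
      h1 (J + 1 : ℕ) (by push_cast; omega)]
    simp
  have s3 : ∑ K ∈ Finset.range (J + 2), G (K + 1) * z ^ K =
      z⁻¹ * ∑ K ∈ Finset.range J, G (K + 1 : ℕ) * z ^ (K + 1) := by
    rw [Finset.sum_range_succ, Finset.sum_range_succ, h1 _ (by omega),
      h1 _ (by push_cast; omega), Finset.mul_sum]
    simp only [zero_mul, add_zero]
    refine Finset.sum_congr rfl fun K _ => ?_
    push_cast
    rw [pow_succ]
    field_simp
  rw [e]
  have : ∀ K : ℕ, (1 / 2 * G (K - 1) - G K + 1 / 2 * G (K + 1)) * z ^ K =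
      1 / 2 * (G (K - 1) * z ^ K) - G K * z ^ K + 1 / 2 * (G (K + 1) * z ^ K) := fun K => by ring
  simp only [this, Finset.sum_add_distrib, Finset.sum_sub_distrib, ← Finset.mul_sum, s1, s2, s3]
  ring

end WordSums

section BoundedVariationIntegral

open Set intervalIntegral

/-- If the increments of `F` are bounded by those of a monotone function times `C`, up to an error
that is small on short intervals, then so is the total increment. -/
theorem norm_sub_le_of_increment_le {E : Type*} [SeminormedAddCommGroup E] {F : ℝ → E}
    {W I : ℝ → ℝ} {a b C : ℝ} (hab : a ≤ b) (hI : ContinuousOn I (Icc a b))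
    (hW : MonotoneOn W (Icc a b))
    (h : ∀ x ∈ Icc a b, ∀ y ∈ Icc a b, x ≤ y →
      ‖F y - F x‖ ≤ (W y - W x) * (C + |I y - I x|)) :
    ‖F b - F a‖ ≤ (W b - W a) * C := by
  have hW' : 0 ≤ W b - W a := sub_nonneg.2 (hW (left_mem_Icc.2 hab) (right_mem_Icc.2 hab) hab)
  have key : ∀ ε > 0, ‖F b - F a‖ ≤ (W b - W a) * (C + ε) := by
    intro ε hε
    have hu := isCompact_Icc.uniformContinuousOn_of_continuous hI
    obtain ⟨δ, hδ, hδI⟩ := Metric.uniformContinuousOn_iff.1 hu ε hε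
    obtain ⟨N, hN⟩ := exists_nat_gt ((b - a) / δ)
    have hba : 0 ≤ b - a := sub_nonneg.2 hab
    have hN0 : (0 : ℝ) < N := (div_nonneg hba hδ.le).trans_lt hN
    have hN' : (b - a) / N < δ := by rw [div_lt_iff₀ hN0]; rw [div_lt_iff₀ hδ] at hN; linarith
    have hs : 0 ≤ (b - a) / N := div_nonneg hba hN0.le
    set t : ℕ → ℝ := fun k => a + k * ((b - a) / N) with ht
    have ht0 : t 0 = a := by simp [ht]
    have htN : t N = b := by simp only [ht]; field_simp; ring
    have hmono : Monotone t := monotone_nat_of_le_succ fun k => by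
      simp only [ht]; push_cast; linarith
    have hmem : ∀ k ≤ N, t k ∈ Icc a b := fun k hk =>
      ⟨ht0 ▸ hmono (Nat.zero_le k), htN ▸ hmono hk⟩
    calc ‖F b - F a‖ = ‖∑ k ∈ Finset.range N, (F (t (k + 1)) - F (t k))‖ := by
          rw [Finset.sum_range_sub (fun k => F (t k)), ht0, htN]
      _ ≤ ∑ k ∈ Finset.range N, (W (t (k + 1)) - W (t k)) * (C + ε) := by
          refine (norm_sum_le _ _).trans (Finset.sum_le_sum fun k hk => ?_)
          have hk' := Finset.mem_range.1 hk
          have m1 := hmem k hk'.le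
          have m2 := hmem (k + 1) hk'
          have hle := hmono (Nat.le_succ k)
          refine (h _ m1 _ m2 hle).trans (mul_le_mul_of_nonneg_left ?_
            (sub_nonneg.2 (hW m1 m2 hle)))
          have := hδI _ m2 _ m1 (by
            rw [Real.dist_eq, show t (k + 1) - t k = (b - a) / N by simp only [ht]; push_cast; ring,
              abs_of_nonneg hs]
            exact hN')
          rw [Real.dist_eq] at this
          linarith
      _ = (W b - W a) * (C + ε) := by
          rw [← Finset.sum_mul, Finset.sum_range_sub (fun k => W (t k)), ht0, htN]
  have hlim : Filter.Tendsto (fun ε : ℝ => (W b - W a) * (C + ε)) (nhdsWithin 0 (Ioi 0))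
      (nhds ((W b - W a) * (C + 0))) :=
    ((continuous_const.mul (continuous_const.add continuous_id)).tendsto 0).mono_left
      nhdsWithin_le_nhds
  rw [add_zero] at hlim
  exact ge_of_tendsto hlim (Filter.eventually_of_mem self_mem_nhdsWithin key)

theorem norm_cexp_I_sub_le (s t : ℝ) :
    ‖Complex.exp (Complex.I * s) - Complex.exp (Complex.I * t)‖ ≤ |s - t| := by
  have : Complex.exp (Complex.I * s) - Complex.exp (Complex.I * t) =
      Complex.exp (Complex.I * t) * (Complex.exp (Complex.I * (s - t : ℝ)) - 1) := by
    rw [mul_sub, ← Complex.exp_add, mul_one]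
    congr 2
    push_cast
    ring
  rw [this, norm_mul, Complex.norm_exp_I_mul_ofReal, one_mul]
  exact Real.norm_exp_I_mul_ofReal_sub_one_le

theorem norm_cexp_I_sub_sub_le (s t : ℝ) :
    ‖Complex.exp (Complex.I * s) - Complex.exp (Complex.I * t) -
      Complex.I * (s - t : ℝ) * Complex.exp (Complex.I * t)‖ ≤ 2 * (|s - t| * |s - t|) := by
  have : Complex.exp (Complex.I * s) - Complex.exp (Complex.I * t) -
      Complex.I * (s - t : ℝ) * Complex.exp (Complex.I * t) = Complex.exp (Complex.I * t) *
        (Complex.exp (Complex.I * (s - t : ℝ)) - 1 - Complex.I * (s - t : ℝ)) := by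
    rw [mul_sub, mul_sub, ← Complex.exp_add, mul_one]
    congr 1
    · congr 2
      push_cast
      ring
    · ring
  rw [this, norm_mul, Complex.norm_exp_I_mul_ofReal, one_mul]
  have hn : ‖Complex.I * ((s - t : ℝ) : ℂ)‖ = |s - t| := by
    rw [norm_mul, Complex.norm_I, one_mul, Complex.norm_real, Real.norm_eq_abs]
  rcases le_total |s - t| 1 with h | h
  · have := Complex.norm_exp_sub_one_sub_id_le (hn.trans_le h)
    rw [hn] at this
    nlinarith [abs_nonneg (s - t)]
  · refine (norm_sub_le _ _).trans ?_
    have h1 := Real.norm_exp_I_mul_ofReal_sub_one_le (x := s - t)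
    rw [Real.norm_eq_abs] at h1
    rw [hn]
    nlinarith

variable {L L' : ℝ → ℝ} {a b : ℝ}

theorem intervalIntegrable_of_mem_Icc {E : Type*} [NormedAddCommGroup E] {f : ℝ → E}
    (hab : a ≤ b) (hf : IntervalIntegrable f volume a b) {x y : ℝ} (hx : x ∈ Icc a b)
    (hy : y ∈ Icc a b) : IntervalIntegrable f volume x y :=
  hf.mono_set (by rw [uIcc_of_le hab]; exact ordConnected_Icc.uIcc_subset hx hy)

theorem integral_sub_integral_of_mem_Icc {E : Type*} [NormedAddCommGroup E] [NormedSpace ℝ E]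
    {f : ℝ → E} (hab : a ≤ b) (hf : IntervalIntegrable f volume a b) {x y : ℝ}
    (hx : x ∈ Icc a b) (hy : y ∈ Icc a b) :
    (∫ t in a..y, f t) - ∫ t in a..x, f t = ∫ t in x..y, f t :=
  integral_interval_sub_left (intervalIntegrable_of_mem_Icc hab hf (left_mem_Icc.2 hab) hy)
    (intervalIntegrable_of_mem_Icc hab hf (left_mem_Icc.2 hab) hx)

theorem continuousOn_of_sub_eq_integral (hab : a ≤ b) (hL' : IntervalIntegrable L' volume a b)
    (hL : ∀ x ∈ Icc a b, ∀ y ∈ Icc a b, L y - L x = ∫ t in x..y, L' t) :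
    ContinuousOn L (Icc a b) := by
  have h := continuousOn_primitive_interval' hL' left_mem_uIcc
  rw [uIcc_of_le hab] at h
  refine (h.const_add (L a)).congr fun x hx => ?_
  beta_reduce
  rw [← hL a (left_mem_Icc.2 hab) x hx]
  ring

theorem continuousOn_cexp_I (hL : ContinuousOn L (Icc a b)) :
    ContinuousOn (fun t => Complex.exp (Complex.I * L t)) (Icc a b) :=
  (continuousOn_const.mul (Complex.continuous_ofReal.comp_continuousOn hL)).cexp

theorem intervalIntegrable_mul_cexp_I (hab : a ≤ b) (hL' : IntervalIntegrable L' volume a b)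
    (hL : ContinuousOn L (Icc a b)) :
    IntervalIntegrable (fun t => (L' t : ℂ) * Complex.exp (Complex.I * L t)) volume a b :=
  IntervalIntegrable.mul_continuousOn ⟨hL'.1.ofReal, hL'.2.ofReal⟩
    (by rw [uIcc_of_le hab]; exact continuousOn_cexp_I hL)

theorem abs_sub_le_integral_abs (hab : a ≤ b) (hL' : IntervalIntegrable L' volume a b)
    (hL : ∀ x ∈ Icc a b, ∀ y ∈ Icc a b, L y - L x = ∫ t in x..y, L' t) {x y t : ℝ}
    (hx : x ∈ Icc a b) (hy : y ∈ Icc a b) (ht : t ∈ Icc x y) :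
    |L t - L x| ≤ ∫ u in x..y, |L' u| := by
  have ht' : t ∈ Icc a b := ⟨hx.1.trans ht.1, ht.2.trans hy.2⟩
  rw [hL x hx t ht']
  refine (abs_integral_le_integral_abs ht.1).trans ?_
  rw [← integral_add_adjacent_intervals (intervalIntegrable_of_mem_Icc hab hL'.abs hx ht')
    (intervalIntegrable_of_mem_Icc hab hL'.abs ht' hy)]
  exact le_add_of_nonneg_right (integral_nonneg ht.2 fun _ _ => abs_nonneg _)

/-- The fundamental theorem of calculus for `exp (i L)` with `L` absolutely continuous. -/
theorem integral_cexp_I_mul (hab : a ≤ b) (hL' : IntervalIntegrable L' volume a b)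
    (hL : ∀ x ∈ Icc a b, ∀ y ∈ Icc a b, L y - L x = ∫ t in x..y, L' t) :
    Complex.I * ∫ t in a..b, L' t * Complex.exp (Complex.I * L t) =
      Complex.exp (Complex.I * L b) - Complex.exp (Complex.I * L a) := by
  have hc := continuousOn_of_sub_eq_integral hab hL' hL
  have hInt := intervalIntegrable_mul_cexp_I hab hL' hc
  set P : ℝ → ℝ := fun x => ∫ u in a..x, |L' u| with hP
  have hPsub : ∀ x ∈ Icc a b, ∀ y ∈ Icc a b, P y - P x = ∫ u in x..y, |L' u| :=
    fun x hx y hy => integral_sub_integral_of_mem_Icc hab hL'.abs hx hy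
  have hPc : ContinuousOn P (Icc a b) := by
    have h := continuousOn_primitive_interval' hL'.abs left_mem_uIcc
    rwa [uIcc_of_le hab] at h
  have hP0 : ∀ x ∈ Icc a b, ∀ y ∈ Icc a b, x ≤ y → 0 ≤ P y - P x := fun x hx y hy hxy => by
    rw [hPsub x hx y hy]; exact integral_nonneg hxy fun _ _ => abs_nonneg _
  have key := norm_sub_le_of_increment_le (F := fun x => Complex.exp (Complex.I * L x) -
    Complex.I * ∫ t in a..x, L' t * Complex.exp (Complex.I * L t)) (W := fun x => 3 * P x)
    (C := 0) hab hPc (fun x hx y hy hxy => by have := hP0 x hx y hy hxy; simp only; linarith)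
    (fun x hx y hy hxy => ?_)
  · simp only [integral_same, mul_zero, sub_zero, norm_le_zero_iff] at key
    linear_combination -key
  · have hA := hPsub x hx y hy
    have e1 : (∫ t in x..y, (L' t : ℂ) * (Complex.exp (Complex.I * L t) -
        Complex.exp (Complex.I * L x))) = (∫ t in a..y, L' t * Complex.exp (Complex.I * L t)) -
          (∫ t in a..x, L' t * Complex.exp (Complex.I * L t)) -
            (L y - L x : ℝ) * Complex.exp (Complex.I * L x) := by
      rw [integral_sub_integral_of_mem_Icc hab hInt hx hy, hL x hx y hy,
        ← intervalIntegral.integral_ofReal, ← intervalIntegral.integral_mul_const,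
        ← integral_sub (intervalIntegrable_of_mem_Icc hab hInt hx hy)]
      · simp only [mul_sub]
      · exact ((intervalIntegrable_of_mem_Icc (f := fun t => (L' t : ℂ)) hab
          ⟨hL'.1.ofReal, hL'.2.ofReal⟩ hx hy).mul_const _)
    have e2 : ‖∫ t in x..y, (L' t : ℂ) * (Complex.exp (Complex.I * L t) -
        Complex.exp (Complex.I * L x))‖ ≤ (P y - P x) * (P y - P x) := by
      have : (P y - P x) * (P y - P x) = ∫ u in x..y, |L' u| * (P y - P x) := by
        rw [intervalIntegral.integral_mul_const, hA]
      rw [this]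
      refine norm_integral_le_of_norm_le hxy (Filter.Eventually.of_forall fun t ht => ?_)
        ((intervalIntegrable_of_mem_Icc hab hL'.abs hx hy).mul_const _)
      rw [norm_mul, Complex.norm_real, Real.norm_eq_abs]
      refine mul_le_mul_of_nonneg_left ?_ (abs_nonneg _)
      rw [hA]
      exact (norm_cexp_I_sub_le _ _).trans
        (abs_sub_le_integral_abs hab hL' hL hx hy (Ioc_subset_Icc_self ht))
    have e3 := norm_cexp_I_sub_sub_le (L y) (L x)
    have e4 := abs_sub_le_integral_abs hab hL' hL hx hy (right_mem_Icc.2 hxy)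
    rw [← hA] at e4
    have e5 : |L y - L x| * |L y - L x| ≤ (P y - P x) * (P y - P x) :=
      mul_self_le_mul_self (abs_nonneg _) e4
    rw [zero_add, abs_of_nonneg (hP0 x hx y hy hxy)]
    have e6 : Complex.exp (Complex.I * L y) - Complex.I * (∫ t in a..y, L' t *
        Complex.exp (Complex.I * L t)) - (Complex.exp (Complex.I * L x) -
          Complex.I * ∫ t in a..x, L' t * Complex.exp (Complex.I * L t)) =
        Complex.exp (Complex.I * L y) - Complex.exp (Complex.I * L x) -
          Complex.I * (L y - L x : ℝ) * Complex.exp (Complex.I * L x) -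
        Complex.I * (∫ t in x..y, (L' t : ℂ) * (Complex.exp (Complex.I * L t) -
        Complex.exp (Complex.I * L x))) := by
      rw [e1]; ring
    rw [e6]
    refine (norm_sub_le _ _).trans ?_
    rw [norm_mul Complex.I, Complex.norm_I, one_mul]
    linarith

theorem norm_integral_mul_cexp_le (hab : a ≤ b) (hL' : IntervalIntegrable L' volume a b)
    (hL : ∀ x ∈ Icc a b, ∀ y ∈ Icc a b, L y - L x = ∫ t in x..y, L' t)
    {G : ℝ → ℂ} {w : ℝ → ℝ}
    (hG : AEStronglyMeasurable G (volume.restrict (Ioc a b)))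
    (hw : ∀ x ∈ Icc a b, ‖G x‖ ≤ w x)
    (hGw : ∀ x ∈ Icc a b, ∀ y ∈ Icc a b, x ≤ y → ‖G y - G x‖ ≤ w x - w y) :
    ‖∫ t in a..b, G t * (L' t * Complex.exp (Complex.I * L t))‖ ≤ 2 * w a := by
  have hc := continuousOn_of_sub_eq_integral hab hL' hL
  have hE := intervalIntegrable_mul_cexp_I hab hL' hc
  have hw_anti : ∀ x ∈ Icc a b, ∀ y ∈ Icc a b, x ≤ y → w y ≤ w x := fun x hx y hy hxy =>
    sub_nonneg.1 ((norm_nonneg _).trans (hGw x hx y hy hxy))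
  have hInt : IntervalIntegrable (fun t => G t * (L' t * Complex.exp (Complex.I * L t)))
      volume a b := by
    rw [intervalIntegrable_iff, uIoc_of_le hab] at hE ⊢
    refine Integrable.bdd_mul (c := w a) hE hG ?_
    refine (ae_restrict_mem measurableSet_Ioc).mono fun t ht => ?_
    have ht' := Ioc_subset_Icc_self ht
    exact (hw t ht').trans (hw_anti a (left_mem_Icc.2 hab) t ht' ht'.1)
  set P : ℝ → ℝ := fun x => ∫ u in a..x, |L' u| with hP
  have hPc : ContinuousOn P (Icc a b) := by
    have h := continuousOn_primitive_interval' hL'.abs left_mem_uIcc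
    rwa [uIcc_of_le hab] at h
  have key := norm_sub_le_of_increment_le (F := fun x => Complex.I * (∫ t in a..x, G t *
    (L' t * Complex.exp (Complex.I * L t))) - G x * Complex.exp (Complex.I * L x))
    (W := fun x => -w x) (C := 1) hab hPc
    (fun x hx y hy hxy => neg_le_neg (hw_anti x hx y hy hxy)) (fun x hx y hy hxy => ?_)
  · simp only [integral_same, mul_zero, zero_sub, mul_one, sub_neg_eq_add] at key
    have ha := hw a (left_mem_Icc.2 hab)
    have hb := hw b (right_mem_Icc.2 hab)
    have e : Complex.I * (∫ t in a..b, G t * (L' t * Complex.exp (Complex.I * L t))) =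
        (Complex.I * (∫ t in a..b, G t * (L' t * Complex.exp (Complex.I * L t))) -
          G b * Complex.exp (Complex.I * L b) + G a * Complex.exp (Complex.I * L a)) +
          G b * Complex.exp (Complex.I * L b) - G a * Complex.exp (Complex.I * L a) := by ring
    have := (norm_sub_le _ _).trans (add_le_add_left (norm_add_le
      (Complex.I * (∫ t in a..b, G t * (L' t * Complex.exp (Complex.I * L t))) -
          G b * Complex.exp (Complex.I * L b) + G a * Complex.exp (Complex.I * L a))
      (G b * Complex.exp (Complex.I * L b))) ‖G a * Complex.exp (Complex.I * L a)‖)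
    rw [← e] at this
    simp only [norm_mul, Complex.norm_I, one_mul, Complex.norm_exp_I_mul_ofReal, mul_one] at this
    linarith
  · have hy' : ∀ t ∈ Icc x y, t ∈ Icc a b := fun t ht => ⟨hx.1.trans ht.1, ht.2.trans hy.2⟩
    have hExy := intervalIntegrable_of_mem_Icc hab hE hx hy
    have hGxy := intervalIntegrable_of_mem_Icc hab hInt hx hy
    have hFTC := integral_cexp_I_mul hxy (intervalIntegrable_of_mem_Icc hab hL' hx hy)
      fun s hs t ht => hL s (hy' s hs) t (hy' t ht)
    have hA : P y - P x = ∫ u in x..y, |L' u| :=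
      integral_sub_integral_of_mem_Icc hab hL'.abs hx hy
    have hA0 : 0 ≤ P y - P x := hA ▸ integral_nonneg hxy fun _ _ => abs_nonneg _
    have e1 : ‖∫ t in x..y, (G t - G y) * (L' t * Complex.exp (Complex.I * L t))‖ ≤
        (w x - w y) * (P y - P x) := by
      rw [hA, ← intervalIntegral.integral_const_mul]
      refine norm_integral_le_of_norm_le hxy (Filter.Eventually.of_forall fun t ht => ?_)
        ((intervalIntegrable_of_mem_Icc hab hL'.abs hx hy).const_mul _)
      have ht' := hy' t (Ioc_subset_Icc_self ht)
      rw [norm_mul, norm_mul, Complex.norm_exp_I_mul_ofReal, mul_one, Complex.norm_real,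
        Real.norm_eq_abs]
      refine mul_le_mul_of_nonneg_right ?_ (abs_nonneg _)
      rw [norm_sub_rev]
      exact (hGw t ht' y hy ht.2).trans (sub_le_sub_right (hw_anti x hx t ht' ht.1.le) _)
    have e2 : Complex.I * (∫ t in a..y, G t * (L' t * Complex.exp (Complex.I * L t))) -
          G y * Complex.exp (Complex.I * L y) -
        (Complex.I * (∫ t in a..x, G t * (L' t * Complex.exp (Complex.I * L t))) -
          G x * Complex.exp (Complex.I * L x)) =
        Complex.I * (∫ t in x..y, (G t - G y) * (L' t * Complex.exp (Complex.I * L t))) -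
          (G y - G x) * Complex.exp (Complex.I * L x) := by
      simp only [sub_mul (G _)]
      rw [integral_sub hGxy (hExy.const_mul _), intervalIntegral.integral_const_mul,
        ← integral_sub_integral_of_mem_Icc hab hInt hx hy]
      linear_combination G y * hFTC
    rw [e2, abs_of_nonneg hA0]
    refine (norm_sub_le _ _).trans ?_
    rw [norm_mul, norm_mul, Complex.norm_I, one_mul, Complex.norm_exp_I_mul_ofReal, mul_one]
    have := hGw x hx y hy hxy
    linarith

end BoundedVariationIntegral

section TailVariation

open Set

/-- The variation of `g` on `[x, ∞)`, as a real number. -/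
noncomputable def tailVar (g : ℝ → ℂ) (x : ℝ) : ℝ := (eVariationOn g (Ici x)).toReal

theorem eVariationOn_Ici_ne_top {g : ℝ → ℂ} (hg : eVariationOn g (Ioi 0) ≠ ⊤) {x : ℝ}
    (hx : 0 < x) : eVariationOn g (Ici x) ≠ ⊤ :=
  ne_top_of_le_ne_top hg (eVariationOn.mono g (Ici_subset_Ioi.2 hx))

theorem tailVar_le {g : ℝ → ℂ} {T : ℝ≥0∞} (hT : T ≠ ⊤) (hg : eVariationOn g (Ioi 0) ≤ T) {x : ℝ}
    (hx : 0 < x) : tailVar g x ≤ T.toReal :=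
  ENNReal.toReal_mono hT ((eVariationOn.mono g (Ici_subset_Ioi.2 hx)).trans hg)

theorem norm_sub_le_tailVar_sub {g : ℝ → ℂ} (hg : eVariationOn g (Ioi 0) ≠ ⊤) {x y : ℝ}
    (hx : 0 < x) (hxy : x ≤ y) : ‖g y - g x‖ ≤ tailVar g x - tailVar g y := by
  have hu := eVariationOn.union g (isGreatest_Icc hxy) (isLeast_Ici (a := y))
  rw [Icc_union_Ici_eq_Ici hxy] at hu
  have hx' := eVariationOn_Ici_ne_top hg hx
  have h1 : eVariationOn g (Icc x y) ≠ ⊤ :=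
    ne_top_of_le_ne_top hx' (eVariationOn.mono g Icc_subset_Ici_self)
  rw [tailVar, tailVar, hu, ENNReal.toReal_add h1 (eVariationOn_Ici_ne_top hg (hx.trans_le hxy)),
    add_sub_cancel_right, ← dist_eq_norm, dist_edist]
  exact ENNReal.toReal_mono h1
    (eVariationOn.edist_le g (right_mem_Icc.2 hxy) (left_mem_Icc.2 hxy))

theorem norm_le_tailVar {g : ℝ → ℂ} (hg : eVariationOn g (Ioi 0) ≠ ⊤) {x : ℝ} (hx : 0 < x)
    (h0 : ∀ ε > 0, ∃ y ≥ x, ‖g y‖ < ε) : ‖g x‖ ≤ tailVar g x := by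
  refine le_of_forall_pos_lt_add fun ε hε => ?_
  obtain ⟨y, hy, hgy⟩ := h0 ε hε
  have h1 := norm_sub_le_tailVar_sub hg hx hy
  have h2 : 0 ≤ tailVar g y := ENNReal.toReal_nonneg
  have h3 := norm_sub_norm_le (g x) (g y)
  rw [norm_sub_rev] at h3
  linarith

theorem exists_norm_lt_of_lintegral_lt_top {γ : ℕ → ℝ → ℂ} {p : ℕ}
    (hLp : ∫⁻ x in Ioi (0 : ℝ), (⨆ k, (‖γ k x‖₊ : ℝ≥0∞)) ^ p < ⊤) (k : ℕ) {x : ℝ} (hx : 0 < x)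
    {ε : ℝ} (hε : 0 < ε) : ∃ y ≥ x, ‖γ k y‖ < ε := by
  by_contra! h
  refine hLp.ne (top_le_iff.1 ?_)
  calc (⊤ : ℝ≥0∞) = ∫⁻ _ in Ici x, ENNReal.ofReal ε ^ p := by
        rw [setLIntegral_const, Real.volume_Ici, ENNReal.mul_top]
        exact pow_ne_zero _ (ENNReal.ofReal_pos.2 hε).ne'
    _ ≤ ∫⁻ y in Ici x, (⨆ k, (‖γ k y‖₊ : ℝ≥0∞)) ^ p := by
        refine setLIntegral_mono' measurableSet_Ici fun y hy => ?_
        gcongr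
        refine le_iSup_of_le k ?_
        rw [← enorm_eq_nnnorm, ← ofReal_norm]
        exact ENNReal.ofReal_le_ofReal (h y hy)
    _ ≤ _ := lintegral_mono_set (Ici_subset_Ioi.2 hx)

theorem norm_prod_sub_prod_le {ι : Type*} (s : Finset ι) {g g' : ι → ℂ} {w w' : ι → ℝ}
    (hg : ∀ i, ‖g i‖ ≤ w i) (hg' : ∀ i, ‖g' i‖ ≤ w' i) (h : ∀ i, ‖g' i - g i‖ ≤ w i - w' i) :
    ‖∏ i ∈ s, g' i - ∏ i ∈ s, g i‖ ≤ ∏ i ∈ s, w i - ∏ i ∈ s, w' i := by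
  classical
  induction s using Finset.induction_on with
  | empty => simp
  | insert i s hi ih =>
    rw [Finset.prod_insert hi, Finset.prod_insert hi, Finset.prod_insert hi, Finset.prod_insert hi]
    have e : g' i * ∏ i ∈ s, g' i - g i * ∏ i ∈ s, g i = (g' i - g i) * ∏ i ∈ s, g i +
        g' i * (∏ i ∈ s, g' i - ∏ i ∈ s, g i) := by ring
    have hp : ‖∏ i ∈ s, g i‖ ≤ ∏ i ∈ s, w i := by
      rw [norm_prod]
      exact Finset.prod_le_prod (fun _ _ => norm_nonneg _) fun i _ => hg i
    rw [e]
    refine (norm_add_le _ _).trans ?_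
    rw [norm_mul, norm_mul]
    have h1 := mul_le_mul (h i) hp (norm_nonneg _) ((norm_nonneg _).trans (h i))
    have h2 := mul_le_mul (hg' i) ih (norm_nonneg _) ((norm_nonneg _).trans (hg' i))
    linarith

theorem aestronglyMeasurable_of_norm_sub_le {G : ℝ → ℂ} {w : ℝ → ℝ} {s : Set ℝ}
    (hs : MeasurableSet s) (h : ∀ x ∈ s, ∀ y ∈ s, x ≤ y → ‖G y - G x‖ ≤ w x - w y) :
    AEStronglyMeasurable G (volume.restrict s) := by
  have key : ∀ r : ℂ → ℝ, (∀ z z', |r z - r z'| ≤ ‖z - z'‖) →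
      AEMeasurable (fun x => r (G x)) (volume.restrict s) := by
    intro r hr
    have h1 : AntitoneOn w s := fun x hx y hy hxy =>
      sub_nonneg.1 ((norm_nonneg _).trans (h x hx y hy hxy))
    have h2 : AntitoneOn (fun x => w x + r (G x)) s := fun x hx y hy hxy => by
      have := le_of_abs_le ((hr (G y) (G x)).trans (h x hx y hy hxy))
      simp only
      linarith
    have := (aemeasurable_restrict_of_antitoneOn (μ := volume) hs h2).sub
      (aemeasurable_restrict_of_antitoneOn hs h1)
    simpa [Pi.sub_def] using this
  have hre := key Complex.re fun z z' => by
    rw [← Complex.sub_re]; exact Complex.abs_re_le_norm _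
  have him := key Complex.im fun z z' => by
    rw [← Complex.sub_im]; exact Complex.abs_im_le_norm _
  have : G = fun x => ((G x).re : ℂ) + (G x).im * Complex.I := by
    funext x; exact (Complex.re_add_im _).symm
  rw [this]
  exact ((Complex.measurable_ofReal.comp_aemeasurable hre).add
    ((Complex.measurable_ofReal.comp_aemeasurable him).mul_const _)).aestronglyMeasurable

end TailVariation

section SeriesIntegral

open Set intervalIntegral

theorem norm_integral_tsum_le {ι : Type*} [Countable ι] {u v : ι → ℂ}
    (hu : Summable fun i => ‖u i‖) (hv : Summable fun i => ‖v i‖) {a b : ℝ} (hab : a ≤ b)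
    {D : ℝ → ℝ} (hD : IntervalIntegrable D volume a b) {L L' : ι → ℝ → ℝ}
    (hL' : ∀ i, IntervalIntegrable (L' i) volume a b)
    (hL : ∀ i, ∀ x ∈ Icc a b, ∀ y ∈ Icc a b, L i y - L i x = ∫ t in x..y, L' i t)
    {G : ι → ℝ → ℂ} {w : ι → ℝ → ℝ} {M : ℝ} (hM : ∀ i, ∀ x ∈ Icc a b, w i x ≤ M)
    (hw : ∀ i, ∀ x ∈ Icc a b, ‖G i x‖ ≤ w i x)
    (hGw : ∀ i, ∀ x ∈ Icc a b, ∀ y ∈ Icc a b, x ≤ y → ‖G i y - G i x‖ ≤ w i x - w i y) (κ : ℝ)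
    (hrel : ∀ i t, u i - D t * v i = κ * L' i t * v i) :
    IntervalIntegrable (fun t => ∑' i, (u i - D t * v i) *
      (G i t * Complex.exp (Complex.I * L i t))) volume a b ∧
    ‖∫ t in a..b, ∑' i, (u i - D t * v i) * (G i t * Complex.exp (Complex.I * L i t))‖ ≤
      2 * |κ| * M * ∑' i, ‖v i‖ := by
  set T : ι → ℝ → ℂ := fun i t => (u i - D t * v i) *
    (G i t * Complex.exp (Complex.I * L i t)) with hT
  have hGm : ∀ i, AEStronglyMeasurable (G i) (volume.restrict (Ioc a b)) := fun i =>
    aestronglyMeasurable_of_norm_sub_le measurableSet_Ioc fun x hx y hy =>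
      hGw i x (Ioc_subset_Icc_self hx) y (Ioc_subset_Icc_self hy)
  have hTeq : ∀ i, T i = fun t => κ * v i *
      (G i t * (L' i t * Complex.exp (Complex.I * L i t))) := fun i => by
    funext t; simp only [hT, hrel]; ring
  have hE := fun i => intervalIntegrable_mul_cexp_I hab (hL' i)
    (continuousOn_of_sub_eq_integral hab (hL' i) (hL i))
  have hTint : ∀ i, Integrable (T i) (volume.restrict (Ioc a b)) := fun i => by
    rw [hTeq]
    refine (Integrable.bdd_mul (c := M) (hE i).1 (hGm i) ?_).const_mul _
    refine (ae_restrict_mem measurableSet_Ioc).mono fun t ht => ?_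
    exact (hw i t (Ioc_subset_Icc_self ht)).trans (hM i t (Ioc_subset_Icc_self ht))
  have hTle : ∀ i, ∀ t ∈ Ioc a b, ‖T i t‖ ≤ (‖u i‖ + |D t| * ‖v i‖) * M := fun i t ht => by
    have ht' := Ioc_subset_Icc_self ht
    have h1 := (hw i t ht').trans (hM i t ht')
    simp only [hT]
    rw [norm_mul, norm_mul, Complex.norm_exp_I_mul_ofReal, mul_one]
    refine mul_le_mul ((norm_sub_le _ _).trans ?_) h1 (norm_nonneg _) (by positivity)
    rw [norm_mul, Complex.norm_real, Real.norm_eq_abs]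
  have hDabs : Integrable (fun t => |D t|) (volume.restrict (Ioc a b)) := hD.abs.1
  have hbound : ∀ i, Integrable (fun t => (‖u i‖ + |D t| * ‖v i‖) * M)
      (volume.restrict (Ioc a b)) := fun i =>
    ((integrable_const _).add (hDabs.mul_const _)).mul_const _
  have hsum : Summable fun i => ∫ t in Ioc a b, ‖T i t‖ := by
    refine Summable.of_nonneg_of_le (fun i => integral_nonneg fun _ => norm_nonneg _) (fun i => ?_)
      (((hu.mul_left (b - a)).add (hv.mul_left (∫ t in Ioc a b, |D t|))).mul_right M)
    refine (integral_mono_ae (hTint i).norm (hbound i)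
      ((ae_restrict_mem measurableSet_Ioc).mono fun t ht => hTle i t ht)).trans_eq ?_
    rw [MeasureTheory.integral_mul_const, integral_add (integrable_const _) (hDabs.mul_const _),
      MeasureTheory.integral_mul_const, setIntegral_const, smul_eq_mul,
      Real.volume_real_Ioc_of_le hab]
  have hTsum : ∀ t ∈ Ioc a b, Summable fun i => (‖u i‖ + |D t| * ‖v i‖) * M := fun t _ =>
    (hu.add (hv.mul_left _)).mul_right M
  have hTsum' : ∀ t ∈ Ioc a b, Summable fun i => T i t := fun t ht =>
    Summable.of_norm_bounded (hTsum t ht) fun i => hTle i t ht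
  constructor
  · rw [intervalIntegrable_iff, uIoc_of_le hab]
    have hB : Integrable (fun t => ((∑' i, ‖u i‖) + |D t| * ∑' i, ‖v i‖) * M)
        (volume.restrict (Ioc a b)) :=
      ((integrable_const _).add (hDabs.mul_const _)).mul_const _
    refine Integrable.mono' hB ?_ ?_
    · refine aestronglyMeasurable_of_tendsto_ae Filter.atTop (f := fun s t => ∑ i ∈ s, T i t)
        (fun s => Finset.aestronglyMeasurable_fun_sum s fun i _ => (hTint i).1) ?_
      exact (ae_restrict_mem measurableSet_Ioc).mono fun t ht => (hTsum' t ht).hasSum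
    · refine (ae_restrict_mem measurableSet_Ioc).mono fun t ht => ?_
      refine (tsum_of_norm_bounded (hTsum t ht).hasSum fun i => hTle i t ht).trans_eq ?_
      rw [tsum_mul_right, hu.tsum_add (hv.mul_left _), tsum_mul_left]
  · have hs := hasSum_integral_of_summable_integral_norm hTint hsum
    rw [integral_of_le hab, ← hs.tsum_eq]
    refine tsum_of_norm_bounded (hv.hasSum.mul_left _) fun i => ?_
    rw [hTeq, MeasureTheory.integral_const_mul, ← integral_of_le hab, norm_mul, norm_mul,
      Complex.norm_real, Real.norm_eq_abs]
    have := norm_integral_mul_cexp_le hab (hL' i) (hL i) (hGm i) (hw i) (hGw i)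
    have h2 := this.trans (mul_le_mul_of_nonneg_left (hM i a (left_mem_Icc.2 hab)) zero_le_two)
    calc _ ≤ |κ| * ‖v i‖ * (2 * M) := mul_le_mul_of_nonneg_left h2 (by positivity)
      _ = _ := by ring

end SeriesIntegral

section PruferSums

open Set intervalIntegral

variable {η : ℝ} {c : ℕ → ℂ} {φ : ℕ → ℝ} {γ : ℕ → ℝ → ℂ} {θ : ℝ → ℝ}

/-- The summand `c_k e^{-i φ_k x} γ_k(x)` of the potential. -/
noncomputable def potentialTerm (c : ℕ → ℂ) (φ : ℕ → ℝ) (γ : ℕ → ℝ → ℂ) (x : ℝ) (k : ℕ) : ℂ :=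
  c k * Complex.exp (-Complex.I * φ k * x) * γ k x

/-- The phase `K (η x + 2 θ(x)) - (φ_{m_1} + ⋯ + φ_{m_J}) x`. -/
noncomputable def wordPhase (η : ℝ) (φ : ℕ → ℝ) (θ : ℝ → ℝ) (K : ℕ) {J : ℕ} (m : Fin J → ℕ)
    (x : ℝ) : ℝ :=
  K * (η * x + 2 * θ x) - (∑ i, φ (m i)) * x

theorem norm_potentialTerm_le {x M : ℝ} {k : ℕ} (h : ‖γ k x‖ ≤ M) :
    ‖potentialTerm c φ γ x k‖ ≤ M * ‖c k‖ := by
  have : -Complex.I * φ k * x = Complex.I * (-(φ k * x) : ℝ) := by push_cast; ring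
  rw [potentialTerm, norm_mul, norm_mul, this, Complex.norm_exp_I_mul_ofReal, mul_one, mul_comm]
  exact mul_le_mul_of_nonneg_right h (norm_nonneg _)

theorem prod_potentialTerm_mul_cexp (K : ℕ) {J : ℕ} (m : Fin J → ℕ) (x : ℝ) :
    (∏ i, potentialTerm c φ γ x (m i)) * Complex.exp (Complex.I * K * (η * x + 2 * θ x)) =
      (∏ i, c (m i)) * ((∏ i, γ (m i) x) *
        Complex.exp (Complex.I * wordPhase η φ θ K m x)) := by
  have e : Complex.exp (Complex.I * wordPhase η φ θ K m x) =
      (∏ i, Complex.exp (-Complex.I * φ (m i) * x)) *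
        Complex.exp (Complex.I * K * (η * x + 2 * θ x)) := by
    rw [← Complex.exp_sum, ← Complex.exp_add, ← Finset.sum_mul, ← Finset.mul_sum, wordPhase]
    congr 1
    push_cast
    ring
  simp only [potentialTerm, Finset.prod_mul_distrib]
  rw [e]
  ring

theorem wordSum_mul_cexp (q : (ℕ → ℝ) → ℝ) (K J : ℕ) (x : ℝ) :
    wordSum (potentialTerm c φ γ x) φ J q * Complex.exp (Complex.I * K * (η * x + 2 * θ x)) =
      ∑' m : Fin J → ℕ, (q (padFin J φ m) * ∏ i, c (m i)) * ((∏ i, γ (m i) x) *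
        Complex.exp (Complex.I * wordPhase η φ θ K m x)) := by
  rw [wordSum, ← tsum_mul_right]
  refine tsum_congr fun m => ?_
  rw [mul_assoc, prod_potentialTerm_mul_cexp, mul_assoc]

theorem SFun_eq_wordSum_mul (J K : ℕ) (x : ℝ) :
    SFun η c φ γ θ J K x = wordSum (potentialTerm c φ γ x) φ J (fAux J K η) *
      Complex.exp (Complex.I * K * (η * x + 2 * θ x)) := by
  rw [wordSum, ← tsum_mul_right]
  rfl

theorem sum_SFun_succ {J : ℕ} {x V D : ℝ}
    (hg : ∀ K : ℤ, WordSummable (potentialTerm c φ γ x) φ (J + 1) (gAux (J + 1) K η))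
    (hb : Summable fun k => ‖potentialTerm c φ γ x k‖)
    (hV : (V : ℂ) = ∑' k, potentialTerm c φ γ x k)
    (hD : D = V / η * (Real.cos (η * x + 2 * θ x) - 1)) :
    ∑ K ∈ Finset.range (J + 1 + 2), SFun η c φ γ θ (J + 1 + 1) K x =
      D * ∑ K ∈ Finset.Icc 1 (J + 1), wordSum (potentialTerm c φ γ x) φ (J + 1)
        (gAux (J + 1) K η) * Complex.exp (Complex.I * K * (η * x + 2 * θ x)) := by
  set b := potentialTerm c φ γ x
  set z := Complex.exp (Complex.I * (η * x + 2 * θ x)) with hz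
  have hpow : ∀ K : ℕ, Complex.exp (Complex.I * K * (η * x + 2 * θ x)) = z ^ K := fun K => by
    rw [hz, ← Complex.exp_nat_mul]
    congr 1
    ring
  have hzero : ∀ K : ℤ, (K ≤ 0 ∨ ((J + 1 : ℕ) : ℤ) < K) →
      wordSum b φ (J + 1) (gAux (J + 1) K η) = 0 := fun K hK => by
    simp [wordSum, gAux_eq_zero hK]
  have key := sum_shift_eq (fun K => wordSum b φ (J + 1) (gAux (J + 1) K η)) (J + 1)
    (fun K hK => hzero K (Or.inl hK)) (fun K hK => hzero K (Or.inr hK)) (Complex.exp_ne_zero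
      (Complex.I * (η * x + 2 * θ x)))
  rw [← hz] at key
  have hcos : (z + z⁻¹) / 2 - 1 = ((Real.cos (η * x + 2 * θ x) - 1 : ℝ) : ℂ) := by
    push_cast
    rw [Complex.cos, hz, ← Complex.exp_neg]
    ring_nf
  have hD' : (D : ℂ) = (η : ℂ)⁻¹ * (∑' k, b k) * ((z + z⁻¹) / 2 - 1) := by
    rw [hcos, ← hV, hD]
    push_cast
    ring
  simp only [SFun_eq_wordSum_mul, hpow]
  rw [hD', mul_assoc, ← key, Finset.mul_sum]
  refine Finset.sum_congr rfl fun K hK => ?_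
  have hK' := Finset.mem_range.1 hK
  rw [wordSum_fAux_succ hb hg K ⟨by omega, by omega⟩]
  ring

theorem fAux_eq_mul_gAux {J K : ℕ} (hK : 1 ≤ K) {ψ : ℕ → ℝ}
    (h : (K : ℝ) * η - ∑ i ∈ Finset.range J, ψ i ≠ 0) :
    fAux J K η ψ = -(1 / (2 * K)) * (K * η - ∑ i ∈ Finset.range J, ψ i) * gAux J K η ψ := by
  have hK' : (K : ℝ) ≠ 0 := by positivity
  rw [gAux, Int.cast_natCast]
  field_simp

variable {θ' : ℝ → ℝ} {a b : ℝ}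

theorem wordPhase_sub (hab : a ≤ b) (hθint : IntervalIntegrable θ' volume a b)
    (hθ : ∀ x ∈ Icc a b, ∀ y ∈ Icc a b, θ y - θ x = ∫ t in x..y, θ' t) (K : ℕ) {J : ℕ}
    (m : Fin J → ℕ) : ∀ x ∈ Icc a b, ∀ y ∈ Icc a b,
      wordPhase η φ θ K m y - wordPhase η φ θ K m x =
        ∫ t in x..y, (K * (η + 2 * θ' t) - ∑ i, φ (m i)) := by
  intro x hx y hy
  have h := intervalIntegrable_of_mem_Icc hab hθint hx hy
  rw [integral_sub (((intervalIntegrable_const).add (h.const_mul 2)).const_mul _)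
    intervalIntegrable_const, intervalIntegral.integral_const_mul,
    integral_add intervalIntegrable_const (h.const_mul 2), intervalIntegral.integral_const_mul,
    ← hθ x hx y hy, intervalIntegral.integral_const, intervalIntegral.integral_const, wordPhase,
    wordPhase, smul_eq_mul, smul_eq_mul]
  ring

/-- The bound on an interval `[a, b]` of positive reals, with `T` a bound on the variations. -/
theorem norm_integral_sum_SFun_sub_le {J : ℕ} (hab : a ≤ b)
    (hθint : IntervalIntegrable θ' volume a b)
    (hθ : ∀ x ∈ Icc a b, ∀ y ∈ Icc a b, θ y - θ x = ∫ t in x..y, θ' t)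
    (hc : Summable fun k => ‖c k‖)
    (hg : ∀ K : ℤ, WordSummable c φ (J + 1) (gAux (J + 1) K η))
    (hf : ∀ K : ℤ, WordSummable c φ (J + 1) (fAux (J + 1) K η))
    (hres : ∀ K ∈ Finset.Icc 1 (J + 1), ∀ m : Fin (J + 1) → ℕ, (K : ℝ) * η - ∑ i, φ (m i) ≠ 0)
    {V : ℝ → ℝ} (hV : ∀ x ∈ Icc a b, (V x : ℂ) = ∑' k, potentialTerm c φ γ x k)
    (hθ' : ∀ᵐ x ∂(volume.restrict (Ioc a b)),
      θ' x = V x / η * (Real.cos (η * x + 2 * θ x) - 1))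
    {w : ℕ → ℝ → ℝ} {T : ℝ} (hT : ∀ k, ∀ x ∈ Icc a b, w k x ≤ T)
    (hw : ∀ k, ∀ x ∈ Icc a b, ‖γ k x‖ ≤ w k x)
    (hγw : ∀ k, ∀ x ∈ Icc a b, ∀ y ∈ Icc a b, x ≤ y → ‖γ k y - γ k x‖ ≤ w k x - w k y) :
    ‖∫ x in a..b, ((∑ K ∈ Finset.Icc 1 (J + 1), SFun η c φ γ θ (J + 1) K x) -
      ∑ K ∈ Finset.range (J + 1 + 2), SFun η c φ γ θ (J + 1 + 1) K x)‖ ≤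
    ∑ K ∈ Finset.Icc 1 (J + 1), (K : ℝ)⁻¹ * (∑' m : Fin (J + 1) → ℕ,
      ‖∏ i, c (m i)‖ * |gAux (J + 1) K η (padFin (J + 1) φ m)|) * T ^ (J + 1) := by
  set u : ℕ → (Fin (J + 1) → ℕ) → ℂ := fun K m =>
    fAux (J + 1) K η (padFin (J + 1) φ m) * ∏ i, c (m i) with hu
  set v : ℕ → (Fin (J + 1) → ℕ) → ℂ := fun K m =>
    gAux (J + 1) K η (padFin (J + 1) φ m) * ∏ i, c (m i) with hv
  have hw0 : ∀ k, ∀ x ∈ Icc a b, 0 ≤ w k x := fun k x hx => (norm_nonneg _).trans (hw k x hx)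
  have key := fun (K : ℕ) (hK : K ∈ Finset.Icc 1 (J + 1)) =>
    norm_integral_tsum_le (u := u K) (v := v K) (hf K).summable.norm (hg K).summable.norm hab hθint
      (L := fun m => wordPhase η φ θ K m) (L' := fun m t => K * (η + 2 * θ' t) - ∑ i, φ (m i))
      (fun m => ((intervalIntegrable_const.add (hθint.const_mul 2)).const_mul _).sub
        intervalIntegrable_const) (fun m => wordPhase_sub hab hθint hθ K m)
      (G := fun m x => ∏ i, γ (m i) x) (w := fun m x => ∏ i, w (m i) x) (M := T ^ (J + 1))
      (fun m x hx => (Finset.prod_le_prod (fun i _ => hw0 _ x hx) fun i _ => hT _ x hx).trans_eq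
        (by simp))
      (fun m x hx => by
        rw [norm_prod]
        exact Finset.prod_le_prod (fun _ _ => norm_nonneg _) fun i _ => hw _ x hx)
      (fun m x hx y hy hxy => norm_prod_sub_prod_le _ (fun i => hw _ x hx) (fun i => hw _ y hy)
        fun i => hγw _ x hx y hy hxy) (-(1 / (2 * K)))
      (fun m t => by
        have hs : ∑ i ∈ Finset.range (J + 1), padFin (J + 1) φ m i = ∑ i, φ (m i) :=
          sum_range_padTuple (φ ∘ m)
        have hK0 : (K : ℂ) ≠ 0 := Nat.cast_ne_zero.2 (by have := Finset.mem_Icc.1 hK; omega)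
        simp only [hu, hv]
        rw [fAux_eq_mul_gAux (Finset.mem_Icc.1 hK).1 (by rw [hs]; exact hres K hK m), hs]
        push_cast
        field_simp
        ring)
  have hpt : ∀ᵐ x ∂(volume.restrict (Ioc a b)),
      (∑ K ∈ Finset.Icc 1 (J + 1), SFun η c φ γ θ (J + 1) K x) -
        ∑ K ∈ Finset.range (J + 1 + 2), SFun η c φ γ θ (J + 1 + 1) K x =
      ∑ K ∈ Finset.Icc 1 (J + 1), ∑' m, (u K m - θ' x * v K m) * ((∏ i, γ (m i) x) *
        Complex.exp (Complex.I * wordPhase η φ θ K m x)) := by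
    filter_upwards [hθ', ae_restrict_mem measurableSet_Ioc] with x hx hxm
    have hx' := Ioc_subset_Icc_self hxm
    have hb : ∀ k, ‖potentialTerm c φ γ x k‖ ≤ T * ‖c k‖ := fun k =>
      norm_potentialTerm_le ((hw k x hx').trans (hT k x hx'))
    have hgb := fun K => (hg K).scale hb
    have hfb := fun K => (hf K).scale hb
    rw [sum_SFun_succ hgb (Summable.of_nonneg_of_le (fun _ => norm_nonneg _) hb (hc.mul_left T))
      (hV x hx') hx, Finset.mul_sum, ← Finset.sum_sub_distrib]
    refine Finset.sum_congr rfl fun K _ => ?_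
    have hterm : ∀ (q : (ℕ → ℝ) → ℝ), WordSummable (potentialTerm c φ γ x) φ (J + 1) q →
        Summable fun m : Fin (J + 1) → ℕ => (q (padFin (J + 1) φ m) * ∏ i, c (m i)) *
          ((∏ i, γ (m i) x) * Complex.exp (Complex.I * wordPhase η φ θ K m x)) := fun q hq => by
      refine (hq.summable.mul_right
        (Complex.exp (Complex.I * K * (η * x + 2 * θ x)))).congr fun m => ?_
      rw [mul_assoc, prod_potentialTerm_mul_cexp, mul_assoc]
    rw [SFun_eq_wordSum_mul, wordSum_mul_cexp, wordSum_mul_cexp, ← tsum_mul_left,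
      ← (hterm _ (hfb K)).tsum_sub ((hterm _ (hgb K)).mul_left _)]
    refine tsum_congr fun m => ?_
    simp only [hu, hv]
    ring
  rw [← uIoc_of_le hab] at hpt
  rw [integral_congr_ae_restrict hpt, integral_finsetSum fun K hK => (key K hK).1]
  refine (norm_sum_le _ _).trans (Finset.sum_le_sum fun K hK => (key K hK).2.trans_eq ?_)
  have hK0 : (0 : ℝ) < K := Nat.cast_pos.2 (Finset.mem_Icc.1 hK).1
  rw [abs_neg, abs_of_pos (by positivity)]
  have : ∀ m, ‖v K m‖ = ‖∏ i, c (m i)‖ * |gAux (J + 1) K η (padFin (J + 1) φ m)| := fun m => by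
    rw [hv, norm_mul, Complex.norm_real, Real.norm_eq_abs, mul_comm]
  simp only [this]
  field_simp

end PruferSums

/-- A bound on the integrals over `[x, b]`, `x > 0`, holds on `[a, b]` with `a ≥ 0` as well. -/
theorem norm_integral_le_of_forall_pos {F : ℝ → ℂ} {a b B : ℝ} (ha : 0 ≤ a) (hab : a < b)
    (h : ∀ x, 0 < x → x ≤ b → ‖∫ t in x..b, F t‖ ≤ B) : ‖∫ t in a..b, F t‖ ≤ B := by
  by_cases hF : IntervalIntegrable F volume a b
  · have hc : ContinuousWithinAt (fun x => ∫ t in x..b, F t) (Set.uIcc a b) a :=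
      intervalIntegral.continuousOn_primitive_interval_left
        ((intervalIntegrable_iff' (by simp)).1 hF) a Set.left_mem_uIcc
    rw [Set.uIcc_of_le hab.le] at hc
    have hc' := (hc.mono Set.Ioc_subset_Icc_self).norm
    have : (nhdsWithin a (Set.Ioc a b)).NeBot := left_nhdsWithin_Ioc_neBot hab
    refine le_of_tendsto hc' ?_
    filter_upwards [self_mem_nhdsWithin] with x hx
    exact h x (ha.trans_lt hx.1) hx.2
  · rw [intervalIntegral.integral_undef hF, norm_zero]
    exact (norm_nonneg _).trans (h b (ha.trans_lt hab) le_rfl)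

theorem stmt11 (p : ℕ) (hp : 2 ≤ p) (η : ℝ) (hη : 0 < η)
    (c : ℕ → ℂ) (φ : ℕ → ℝ) (γ : ℕ → ℝ → ℂ)
    (V : ℝ → ℝ)
    (hV : ∀ x ∈ Set.Ioi (0:ℝ),
      (V x : ℂ) = ∑' k, c k * Complex.exp (-Complex.I * (φ k) * x) * γ k x)
    (hBV : ⨆ k, eVariationOn (γ k) (Set.Ioi 0) < ⊤)
    (hLp : ∫⁻ x in Set.Ioi (0:ℝ), (⨆ k, (‖γ k x‖₊ : ℝ≥0∞)) ^ p < ⊤)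
    (hc : Summable fun k => ‖c k‖)
    (hsd : ∀ j : ℕ, 1 ≤ j → j ≤ p - 1 →
      Summable fun m : Fin j → ℕ => ‖∏ i, c (m i)‖ * |hFun j η (padFin j φ m)|)
    (hres : ∀ K J : ℕ, 1 ≤ K → K ≤ J → J ≤ p → ∀ (m : Fin J → ℕ) (ε : Fin J → ℝ),
      (∀ i, ε i = 1 ∨ ε i = -1) → (K : ℝ) * η ≠ ∑ i, ε i * φ (m i))
    (θ θ' : ℝ → ℝ)
    (hθAC : ∀ a b : ℝ, 0 < a → a ≤ b →
      IntervalIntegrable θ' volume a b ∧ θ b - θ a = ∫ x in a..b, θ' x)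
    (hθ' : ∀ᵐ x ∂(volume.restrict (Set.Ioi (0:ℝ))),
      θ' x = (V x / η) * (Real.cos (η * x + 2 * θ x) - 1)) :
    ∀ J : ℕ, 1 ≤ J → J ≤ p - 1 → ∀ a b : ℝ, 0 ≤ a → a < b →
      ENNReal.ofReal
          ‖∫ x in a..b,
              ((∑ K ∈ Finset.Icc 1 J, SFun η c φ γ θ J K x) -
                ∑ K ∈ Finset.range (J + 2), SFun η c φ γ θ (J + 1) K x)‖
        ≤ ∑ K ∈ Finset.Icc 1 J,
            (K : ℝ≥0∞)⁻¹ * EFun η c φ J (K : ℤ) *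
              (⨆ k, eVariationOn (γ k) (Set.Ioi 0)) ^ J := by
  intro J hJ1 hJp a b ha hab
  obtain ⟨J, rfl⟩ : ∃ J₀, J = J₀ + 1 := ⟨J - 1, by omega⟩
  have hres' : ∀ K J : ℕ, 1 ≤ K → K ≤ J → J ≤ p - 1 → ∀ t : Fin J → ℕ,
      (K : ℝ) * η ≠ ∑ i, φ (t i) := fun K J h1 h2 h3 t => by
    simpa using hres K J h1 h2 (by omega) t (fun _ => 1) fun _ => Or.inl rfl
  have hg := fun K => wordSummable_gAux hsd hres' K (J + 1) hJp
  have hf := fun K => wordSummable_fAux_succ hc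
    (fun K => wordSummable_gAux hsd hres' K J (by omega)) K
  have hvar := fun k => le_iSup (fun k => eVariationOn (γ k) (Set.Ioi 0)) k
  have hfin := fun k => ((hvar k).trans_lt hBV).ne
  have hInt : ∀ x y : ℝ, 0 < x → 0 < y → θ y - θ x = ∫ t in x..y, θ' t := fun x y hx hy => by
    rcases le_total x y with h | h
    · exact (hθAC x y hx h).2
    · rw [intervalIntegral.integral_symm, ← (hθAC y x hy h).2, neg_sub]
  have hB : ∀ x, 0 < x → x ≤ b → _ := fun x hx hxb =>
    norm_integral_sum_SFun_sub_le (a := x) hxb (hθAC x b hx hxb).1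
      (fun s hs t ht => hInt s t (hx.trans_le hs.1) (hx.trans_le ht.1)) hc hg hf
      (fun K hK m => sub_ne_zero.2 (hres' K (J + 1) (Finset.mem_Icc.1 hK).1
        (Finset.mem_Icc.1 hK).2 hJp m))
      (fun s hs => hV s (hx.trans_le hs.1))
      (ae_restrict_of_ae_restrict_of_subset (fun s hs => hx.trans hs.1) hθ')
      (w := fun k => tailVar (γ k))
      (fun k s hs => tailVar_le hBV.ne (hvar k) (hx.trans_le hs.1))
      (fun k s hs => norm_le_tailVar (hfin k) (hx.trans_le hs.1) fun ε hε =>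
        exists_norm_lt_of_lintegral_lt_top hLp k (hx.trans_le hs.1) hε)
      (fun k s hs t _ hst => norm_sub_le_tailVar_sub (hfin k) (hx.trans_le hs.1) hst)
  refine (ENNReal.ofReal_le_ofReal (norm_integral_le_of_forall_pos ha hab hB)).trans_eq ?_
  have hnn : ∀ K : ℕ, 0 ≤ ∑' m : Fin (J + 1) → ℕ,
      ‖∏ i, c (m i)‖ * |gAux (J + 1) K η (padFin (J + 1) φ m)| := fun K =>
    tsum_nonneg fun m => by positivity
  rw [ENNReal.ofReal_sum_of_nonneg fun K _ => mul_nonneg (mul_nonneg (by positivity) (hnn K))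
    (by positivity)]
  refine Finset.sum_congr rfl fun K hK => ?_
  have hK0 : (0 : ℝ) < K := Nat.cast_pos.2 (Finset.mem_Icc.1 hK).1
  rw [ENNReal.ofReal_mul (mul_nonneg (by positivity) (hnn K)),
    ENNReal.ofReal_mul (by positivity), ENNReal.ofReal_pow ENNReal.toReal_nonneg,
    ENNReal.ofReal_toReal hBV.ne, ENNReal.ofReal_inv_of_pos hK0, ENNReal.ofReal_natCast,
    ENNReal.ofReal_tsum_of_nonneg (fun m => by positivity) (hg K), EFun]
  congr 2
  refine tsum_congr fun m => ?_
  rw [ENNReal.ofReal_mul (norm_nonneg _), ← Real.norm_eq_abs, ofReal_norm, ofReal_norm,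
    enorm_eq_nnnorm, enorm_eq_nnnorm]
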